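/- Let S(X) denote the number of integers q ≤ X with q ≡ 1 (mod 4) for which the Erdős conjecture holds mod q. Then liminf_{X→∞} S(X)/(X/4) ≥ 0.67. -/

import Mathlib

open Filter Topology Finset

/-- `f : ℕ → ℤ` is Erdősian mod `q`: periodic with period `q`, takes values `±1`
off multiples of `q`, and `0` on multiples of `q`. -/
def IsErdosian (q : ℕ) (f : ℕ → ℤ) : Prop :=
  (∀ n : ℕ, 1 ≤ n → f (n + q) = f n) ∧
  (∀ n : ℕ, 1 ≤ n → ¬ q ∣ n → f n = 1 ∨ f n = -1) ∧
  (∀ n : ℕ, 1 ≤ n → q ∣ n → f n = 0)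

/-- The Erdős conjecture is false mod `q`: there is an Erdősian function mod `q`
whose partial sums `∑_{n=1}^N f(n)/n` tend to `0`. -/
def ErdosConjectureFalse (q : ℕ) : Prop :=
  ∃ f : ℕ → ℤ, IsErdosian q f ∧
    Tendsto (fun N : ℕ => ∑ n ∈ Finset.Icc 1 N, (f n : ℝ) / n) atTop (nhds 0)

/-- The Erdős conjecture holds (is true) mod `q`. -/
def ErdosConjectureHolds (q : ℕ) : Prop := ¬ ErdosConjectureFalse q

section partA1
open Filter Topology Finset

theorem bk_factor (n : ℕ) (g : ℂ → ℂ) (hg : Differentiable ℂ g) (a : ℂ)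
    (h : (n : ℕ∞) ≤ analyticOrderAt g a) :
    ∃ k : ℂ → ℂ, Differentiable ℂ k ∧ ∀ z, g z = (z - a) ^ n * k z := by
  induction n generalizing g with
  | zero => exact ⟨g, hg, by simp⟩
  | succ n ih =>
    have hga : AnalyticAt ℂ g a := hg.analyticAt a
    have h0 : g a = 0 := by
      apply apply_eq_zero_of_analyticOrderAt_ne_zero
      intro h1
      rw [h1] at h
      simp at h
    have hd : Differentiable ℂ (dslope g a) := by
      have := (Complex.differentiableOn_dslope (s := Set.univ) (c := a) (f := g) Filter.univ_mem).2
        hg.differentiableOn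
      exact differentiableOn_univ.1 this
    have hmul : ∀ z, g z = (z - a) * dslope g a z := by
      intro z
      have := sub_smul_dslope g a z
      rw [smul_eq_mul, h0, sub_zero] at this
      exact this.symm
    have hord : (n : ℕ∞) ≤ analyticOrderAt (dslope g a) a := by
      have e : g = (fun z => z - a) * dslope g a := by
        funext z; exact hmul z
      rw [e, analyticOrderAt_mul (by fun_prop) (hd.analyticAt a)] at h
      have h1 : analyticOrderAt (fun z : ℂ => z - a) a = 1 := by
        simp
      rw [h1, Nat.cast_succ, add_comm] at h
      exact (ENat.add_le_add_iff_left (by simp)).1 h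
    obtain ⟨k, hk, hk2⟩ := ih _ hd hord
    exact ⟨k, hk, fun z => by rw [hmul z, hk2 z]; ring⟩

theorem bk_factor_multi (n S : ℕ) (g : ℂ → ℂ) (hg : Differentiable ℂ g)
    (h : ∀ s < S, (n : ℕ∞) ≤ analyticOrderAt g (s : ℂ)) :
    ∃ k : ℂ → ℂ, Differentiable ℂ k ∧ ∀ z, g z = (∏ s ∈ range S, (z - s)) ^ n * k z := by
  induction S with
  | zero => exact ⟨g, hg, by simp⟩
  | succ S ih =>
    obtain ⟨k, hk, hk2⟩ := ih (fun s hs => h s (by omega))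
    have hord : (n : ℕ∞) ≤ analyticOrderAt k (S : ℂ) := by
      have e : g = (fun z => (∏ s ∈ range S, (z - (s : ℂ))) ^ n) * k := by
        funext z; exact hk2 z
      have h1 := h S (by omega)
      have han : AnalyticAt ℂ (fun z => (∏ s ∈ range S, (z - (s : ℂ))) ^ n) (S : ℂ) := by
        apply Differentiable.analyticAt
        fun_prop
      rw [e, analyticOrderAt_mul han (hk.analyticAt _)] at h1
      have h2 : analyticOrderAt (fun z => (∏ s ∈ range S, (z - (s : ℂ))) ^ n) (S : ℂ) = 0 := by
        rw [han.analyticOrderAt_eq_zero]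
        apply pow_ne_zero
        rw [Finset.prod_ne_zero_iff]
        intro s hs
        rw [sub_ne_zero]
        simp only [mem_range] at hs
        exact_mod_cast hs.ne'
      rwa [h2, zero_add] at h1
    obtain ⟨k', hk', hk2'⟩ := bk_factor n k hk _ hord
    refine ⟨k', hk', fun z => ?_⟩
    rw [hk2, hk2', prod_range_succ, mul_pow]
    ring

theorem bk_schwarz (n S : ℕ) (g : ℂ → ℂ) (hg : Differentiable ℂ g)
    (h : ∀ s < S, ∀ j < n, iteratedDeriv j g (s : ℂ) = 0) (s0 : ℕ) (hs0 : s0 < S)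
    (R M : ℝ) (hR : 2 * (S : ℝ) ≤ R) (hM : ∀ z : ℂ, ‖z‖ ≤ R → ‖g z‖ ≤ M) :
    ‖iteratedDeriv n g (s0 : ℂ)‖ ≤ n.factorial * (M * (2 * S / R) ^ (n * S)) := by
  have hS : (1 : ℝ) ≤ S := by exact_mod_cast (by omega : 1 ≤ S)
  have hRpos : 0 < R := by linarith
  have hM0 : 0 ≤ M := (norm_nonneg _).trans (hM 0 (by simpa using hRpos.le))
  obtain ⟨k, hk, hk2⟩ := bk_factor_multi n S g hg (fun s hs =>
    (natCast_le_analyticOrderAt_iff_iteratedDeriv_eq_zero (hg.analyticAt _)).2 (h s hs))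
  have hkb : ∀ z : ℂ, ‖z‖ ≤ R → ‖k z‖ ≤ M / (R / 2) ^ (n * S) := by
    intro z hz
    refine Complex.norm_le_of_forall_mem_frontier_norm_le (U := Metric.ball 0 R)
      Metric.isBounded_ball hk.diffContOnCl ?_ ?_
    · intro w hw
      rw [frontier_ball _ hRpos.ne', mem_sphere_zero_iff_norm] at hw
      rw [le_div_iff₀ (by positivity)]
      calc ‖k w‖ * (R / 2) ^ (n * S) ≤ ‖k w‖ * ‖(∏ s ∈ range S, (w - (s : ℂ))) ^ n‖ := by
            gcongr
            rw [norm_pow, norm_prod, mul_comm, pow_mul]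
            gcongr
            calc (R / 2) ^ S = ∏ s ∈ range S, (R / 2) := by rw [prod_const, card_range]
              _ ≤ _ := by
                apply Finset.prod_le_prod
                · intros; positivity
                · intro s hs
                  have h1 := norm_sub_norm_le w (s : ℂ)
                  rw [hw, Complex.norm_natCast] at h1
                  have : (s : ℝ) ≤ S := by exact_mod_cast (mem_range.1 hs).le
                  linarith
        _ = ‖g w‖ := by rw [hk2 w, norm_mul, mul_comm]
        _ ≤ M := hM w hw.le
    · rw [closure_ball _ hRpos.ne', mem_closedBall_zero_iff]; exact hz
  have hb : ∀ z ∈ Metric.sphere (s0 : ℂ) 1, ‖g z‖ ≤ M * (2 * S / R) ^ (n * S) := by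
    intro z hz
    rw [mem_sphere_iff_norm] at hz
    have hs1 : (s0 : ℝ) + 1 ≤ S := by exact_mod_cast hs0
    have hzn : ‖z‖ ≤ R := by
      have : ‖z‖ ≤ ‖z - s0‖ + ‖(s0 : ℂ)‖ := by simpa using norm_add_le (z - s0) (s0 : ℂ)
      rw [hz, Complex.norm_natCast] at this
      linarith
    rw [hk2, norm_mul]
    calc _ ≤ (S : ℝ) ^ (n * S) * (M / (R / 2) ^ (n * S)) := by
          gcongr
          · rw [norm_pow, norm_prod, mul_comm n, pow_mul]
            gcongr
            calc _ ≤ ∏ s ∈ range S, (S : ℝ) := by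
                  apply Finset.prod_le_prod
                  · intros; positivity
                  · intro s hs
                    have hs2 : (s : ℝ) + 1 ≤ S := by exact_mod_cast (mem_range.1 hs)
                    have : ‖z - s‖ ≤ ‖z - s0‖ + ‖(s0 : ℂ) - s‖ := by
                      simpa using norm_add_le (z - s0) ((s0 : ℂ) - s)
                    have h3 : ‖(s0 : ℂ) - s‖ ≤ S - 1 := by
                      have : ((s0 : ℂ) - s) = (((s0 : ℝ) - s : ℝ) : ℂ) := by push_cast; rfl
                      rw [this, Complex.norm_real, Real.norm_eq_abs, abs_le]
                      have := (Nat.cast_nonneg s : (0 : ℝ) ≤ s)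
                      have := (Nat.cast_nonneg s0 : (0 : ℝ) ≤ s0)
                      constructor <;> linarith
                    linarith
              _ = _ := by simp
          · exact hkb z hzn
      _ = _ := by
          rw [div_pow, div_pow, mul_pow]
          field_simp
  have := Complex.norm_iteratedDeriv_le_of_forall_mem_sphere_norm_le n one_pos
    hg.diffContOnCl hb
  simpa [mul_assoc] using this

end partA1

section partA2
open Filter Topology Finset

theorem bk_change {B I J : Type*} [Fintype B] [Fintype I] (X : B → I → ℂ) (Y : B → J → ℂ)
    (d : J → I → ℂ) (hd : ∀ b j, Y b j = ∑ k, d j k * X b k) (C : ℝ)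
    (hC : ∀ j, ∑ k, ‖d j k‖ ≤ C) (hC0 : 0 ≤ C) (M : ℝ) (hM : 0 ≤ M) (n : ℕ) (E : B → ℂ)
    (h : ∀ l : List I, l.length = n → ‖∑ b, E b * (l.map (X b)).prod‖ ≤ M) :
    ∀ v : List J, v.length = n → ‖∑ b, E b * (v.map (Y b)).prod‖ ≤ C ^ n * M := by
  induction n generalizing E with
  | zero =>
    intro v hv
    have := h [] rfl
    rw [List.length_eq_zero_iff] at hv
    subst hv
    simpa using this
  | succ n ih =>
    intro v hv
    cases v with
    | nil => simp at hv
    | cons j v =>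
      have hv' : v.length = n := by simpa using hv
      have key : ∑ b, E b * (((j :: v).map (Y b)).prod)
          = ∑ k, d j k * ∑ b, (E b * X b k) * (v.map (Y b)).prod := by
        simp only [List.map_cons, List.prod_cons, hd _ j, Finset.mul_sum, Finset.sum_mul]
        rw [Finset.sum_comm]
        refine Finset.sum_congr rfl fun k _ => Finset.sum_congr rfl fun b _ => ?_
        ring
      rw [key]
      have hb : ∀ k, ‖∑ b, (E b * X b k) * (v.map (Y b)).prod‖ ≤ C ^ n * M := by
        intro k
        apply ih (fun b => E b * X b k) _ v hv'
        intro l hl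
        have := h (k :: l) (by simp [hl])
        simpa [mul_assoc] using this
      calc _ ≤ ∑ k, ‖d j k‖ * (C ^ n * M) := by
            refine (norm_sum_le _ _).trans (Finset.sum_le_sum fun k _ => ?_)
            rw [norm_mul]
            gcongr
            exact hb k
        _ = (∑ k, ‖d j k‖) * (C ^ n * M) := by rw [Finset.sum_mul]
        _ ≤ C * (C ^ n * M) := by gcongr; exact hC j
        _ = _ := by ring

theorem bk_iter {B : Type*} [Fintype B] (E X : B → ℂ) (j : ℕ) :
    iteratedDeriv j (fun z => ∑ b, E b * Complex.exp (X b * z))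
      = fun z => ∑ b, E b * X b ^ j * Complex.exp (X b * z) := by
  induction j with
  | zero => simp
  | succ j ih =>
    rw [iteratedDeriv_succ, ih]
    funext z
    have : HasDerivAt (fun z => ∑ b, E b * X b ^ j * Complex.exp (X b * z))
        (∑ b, E b * X b ^ (j+1) * Complex.exp (X b * z)) z := by
      apply HasDerivAt.fun_sum
      intro b _
      have h1 : HasDerivAt (fun z => X b * z) (X b) z := by
        simpa using (hasDerivAt_id z).const_mul (X b)
      refine ((h1.cexp).const_mul (E b * X b ^ j)).congr_deriv ?_
      ring
    exact this.deriv

theorem bk_pigeon {I : Type*} [Fintype I] [DecidableEq I] (l : List I) (hl : l ≠ []) :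
    ∃ k, l.length ≤ Fintype.card I * l.count k := by
  by_contra! hcon
  obtain ⟨a, _⟩ := List.exists_mem_of_ne_nil l hl
  have h1 : ∑ k, l.count k = l.length := by
    have := Multiset.toFinset_sum_count_eq (l : Multiset I)
    simp only [Multiset.coe_count, Multiset.coe_card] at this
    rw [← this]
    symm
    apply Finset.sum_subset (Finset.subset_univ _)
    intro x _ hx
    simpa [List.count_eq_zero] using hx
  have h2 : ∑ k : I, Fintype.card I * l.count k < ∑ k : I, l.length :=
    Finset.sum_lt_sum_of_nonempty ⟨a, mem_univ _⟩ (fun k _ => hcon k)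
  rw [← Finset.mul_sum, h1] at h2
  simp at h2

theorem bk_analytic {B I : Type*} [Fintype B] [Fintype I] [DecidableEq I]
    (X : B → I → ℂ) (p : B → ℂ) (T S : ℕ) (hT : 0 < T) (Lam P R : ℝ) (hLam : 1 ≤ Lam)
    (hP : 0 ≤ P)
    (hX : ∀ b k, ‖X b k‖ ≤ Lam) (hp : ∀ b, ‖p b‖ ≤ P) (hR : 2 * (S : ℝ) ≤ R)
    (hv : ∀ l : List I, l.length < T → ∀ s : I → ℕ, (∀ k, s k < S) →
      ∑ b, p b * Complex.exp (∑ k, X b k * s k) * (l.map (X b)).prod = 0)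
    (l : List I) (hl : l.length = T) (s : I → ℕ) (hs : ∀ k, s k < S) :
    ‖∑ b, p b * Complex.exp (∑ k, X b k * s k) * (l.map (X b)).prod‖ ≤
      (T : ℝ) ^ T * (Fintype.card B * P * Lam ^ T * Real.exp (Lam * (Fintype.card I * S + R)))
        * (2 * S / R) ^ ((T * S : ℝ) / Fintype.card I) := by
  obtain ⟨k0, hk0⟩ := bk_pigeon l (by rintro rfl; simp at hl; omega)
  rw [hl] at hk0
  have hS : (1 : ℝ) ≤ S := by exact_mod_cast (Nat.zero_le _).trans_lt (hs k0)
  have hRpos : 0 < R := by linarith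
  set n := l.count k0 with hn
  have hnT : n ≤ T := by rw [← hl]; exact List.count_le_length
  set rest := l.filter (fun x => !(x == k0)) with hrest
  have hperm : ∀ f : I → ℂ, (l.map f).prod = f k0 ^ n * (rest.map f).prod := by
    intro f
    have h1 := (List.filter_append_perm (fun x => x == k0) l).map f
    rw [← h1.prod_eq, List.map_append, List.prod_append, List.filter_beq]
    simp [hrest, hn]
  have hlen : rest.length + n = T := by
    have h1 := List.length_eq_length_filter_add (l := l) (fun x => x == k0)
    rw [List.filter_beq, List.length_replicate] at h1
    have h2 : rest.length = (l.filter (fun x => !(x == k0))).length := rfl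
    rw [h2, ← hl, h1, hn, add_comm]
  set E : B → ℂ := fun b => p b * Complex.exp (∑ k ∈ univ.erase k0, X b k * s k)
    * (rest.map (X b)).prod with hE
  set g : ℂ → ℂ := fun z => ∑ b, E b * Complex.exp (X b k0 * z) with hg
  have hgd : Differentiable ℂ g := by
    rw [hg]; fun_prop
  have hexp : ∀ (b : B) (t : ℕ) , Complex.exp (∑ k, X b k * (Function.update s k0 t k : ℕ))
      = Complex.exp (∑ k ∈ univ.erase k0, X b k * s k) * Complex.exp (X b k0 * t) := by
    intro b t
    rw [← Complex.exp_add, ← Finset.sum_erase_add _ _ (mem_univ k0)]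
    congr 2
    · apply Finset.sum_congr rfl
      intro k hk
      rw [Function.update_of_ne (Finset.ne_of_mem_erase hk)]
    · simp
  have hit : ∀ j t : ℕ, iteratedDeriv j g t =
      ∑ b, p b * Complex.exp (∑ k, X b k * (Function.update s k0 t k : ℕ))
        * ((List.replicate j k0 ++ rest).map (X b)).prod := by
    intro j t
    rw [hg, bk_iter]
    refine Finset.sum_congr rfl fun b _ => ?_
    rw [hexp, hE]
    simp
    ring
  have hzero : ∀ t < S, ∀ j < n, iteratedDeriv j g (t : ℂ) = 0 := by
    intro t ht j hj
    rw [hit]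
    apply hv
    · simp; omega
    · intro k
      by_cases hk : k = k0
      · subst hk; simpa using ht
      · rw [Function.update_of_ne hk]; exact hs k
  have hval : ∑ b, p b * Complex.exp (∑ k, X b k * s k) * (l.map (X b)).prod
      = iteratedDeriv n g (s k0 : ℂ) := by
    rw [hit]
    refine Finset.sum_congr rfl fun b _ => ?_
    rw [Function.update_eq_self, hperm]
    simp
  have hM : ∀ z : ℂ, ‖z‖ ≤ R → ‖g z‖ ≤ Fintype.card B * P * Lam ^ T *
      Real.exp (Lam * (Fintype.card I * S + R)) := by
    intro z hz
    rw [hg]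
    refine (norm_sum_le _ _).trans ?_
    have : ∀ b ∈ (univ : Finset B), ‖E b * Complex.exp (X b k0 * z)‖ ≤
        P * Lam ^ T * Real.exp (Lam * (Fintype.card I * S + R)) := by
      intro b _
      have e : E b * Complex.exp (X b k0 * z) = p b * (rest.map (X b)).prod *
          Complex.exp (∑ k ∈ univ.erase k0, X b k * s k + X b k0 * z) := by
        rw [Complex.exp_add, hE]; ring
      rw [e, norm_mul, norm_mul]
      gcongr
      · exact hp b
      · calc ‖(rest.map (X b)).prod‖ ≤ Lam ^ rest.length := by
              clear_value rest
              clear * - hX hLam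
              induction rest with
              | nil => simp
              | cons a l ih =>
                rw [List.map_cons, List.prod_cons, norm_mul, List.length_cons, pow_succ, mul_comm]
                gcongr
                exact hX b a
          _ ≤ Lam ^ T := pow_le_pow_right₀ hLam (by omega)
      · refine (Complex.norm_exp_le_exp_norm _).trans ?_
        rw [Real.exp_le_exp]
        refine (norm_add_le _ _).trans ?_
        rw [mul_add]
        gcongr
        · refine (norm_sum_le _ _).trans ?_
          calc _ ≤ ∑ k ∈ univ.erase k0, Lam * S := by
                apply Finset.sum_le_sum
                intro k _
                rw [norm_mul, Complex.norm_natCast]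
                have : (s k : ℝ) ≤ S := by exact_mod_cast (hs k).le
                gcongr
                exact hX b k
            _ ≤ ∑ k : I, Lam * S := by
                apply Finset.sum_le_sum_of_subset_of_nonneg (Finset.subset_univ _)
                intros; positivity
            _ = _ := by simp; ring
        · rw [norm_mul]
          gcongr
          exact hX b k0
    refine (Finset.sum_le_sum this).trans ?_
    simp
    apply le_of_eq
    ring
  rw [hval]
  refine (bk_schwarz n S g hgd hzero (s k0) (hs k0) R _ hR hM).trans ?_
  rw [← mul_assoc]
  have hcard : (0 : ℝ) < Fintype.card I := by exact_mod_cast Fintype.card_pos_iff.2 ⟨k0⟩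
  gcongr
  · calc (n.factorial : ℝ) ≤ T.factorial := by exact_mod_cast Nat.factorial_le hnT
      _ ≤ (T : ℝ) ^ T := by exact_mod_cast Nat.factorial_le_pow T
  · rw [← Real.rpow_natCast]
    apply Real.rpow_le_rpow_of_exponent_ge
    · positivity
    · rw [div_le_one hRpos]; exact hR
    · rw [div_le_iff₀ hcard]
      have : (T : ℝ) ≤ Fintype.card I * n := by exact_mod_cast hk0
      push_cast
      nlinarith

end partA2

section partA3
open Filter Topology Finset

set_option maxHeartbeats 1000000 in
theorem bk_growth (D : ℕ) (hD : 1 ≤ D) (Om c1 C2 Cd Cx : ℝ) (hOm : 1 ≤ Om) (hc1 : 1 ≤ c1)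
    (hC2 : 1 ≤ C2) (hCd : 1 ≤ Cd) (hCx : 1 ≤ Cx) :
    ∃ S N : ℕ, 1 ≤ S ∧ 1 ≤ N ∧ ∀ L : ℕ, L = 2 * S * N ^ (D - 1) → ∀ P : ℝ,
      P = c1 ^ 2 * (L : ℝ) ^ D * (Om * L) ^ (D * N ^ D) * C2 ^ (L * S) →
      ∀ T : ℕ, N ^ D ≤ T → ∃ R : ℝ, 2 * (S : ℝ) ≤ R ∧
      C2 ^ (L * S) * (Cd ^ T * ((T : ℝ) ^ T * ((L : ℝ) ^ D * P * (Cx * L) ^ T *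
        Real.exp (Cx * L * (D * S + R))) * (2 * S / R) ^ ((T * S : ℝ) / D)))
        * ((L : ℝ) ^ D * P * (Om * L) ^ T * C2 ^ (L * S)) ^ (D - 1) < 1 := by
  set S : ℕ := D ^ 2 * (3 * D + 3 + (D - 1) * (3 * D + 1)) with hSdef
  have hS1 : 1 ≤ S := by
    rw [hSdef]; exact Nat.mul_pos (by positivity) (by positivity)
  have hSeq : (S : ℝ) / D ^ 2 = 3 * D + 3 + ((D - 1 : ℕ) : ℝ) * (3 * D + 1) := by
    have : (D : ℝ) ≠ 0 := by positivity
    rw [hSdef]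
    push_cast
    field_simp
  clear_value S
  obtain ⟨s, hs⟩ : ∃ x, x = Real.log (2 * S) := ⟨_, rfl⟩
  obtain ⟨lo, dlo⟩ : ∃ x, x = Real.log Om := ⟨_, rfl⟩
  obtain ⟨lC2, dlC2⟩ : ∃ x, x = Real.log C2 := ⟨_, rfl⟩
  obtain ⟨lCd, dlCd⟩ : ∃ x, x = Real.log Cd := ⟨_, rfl⟩
  obtain ⟨lCx, dlCx⟩ : ∃ x, x = Real.log Cx := ⟨_, rfl⟩
  obtain ⟨lc, dlc⟩ : ∃ x, x = Real.log c1 := ⟨_, rfl⟩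
  obtain ⟨K1, hK1⟩ : ∃ x : ℝ, x = 2 * lc + D * s + D * (lo + s) + 2 * S * S * lC2 := ⟨_, rfl⟩
  obtain ⟨K2, hK2⟩ : ∃ x : ℝ, x = 2 * S * S * lC2 + lCd + D * s + K1 + lCx + s + Cx * (2 * S * (D * S) + 2 * S)
    + S * s / D + ((D - 1 : ℕ) : ℝ) * (D * s + K1 + lo + s + 2 * S * S * lC2) := ⟨_, rfl⟩
  obtain ⟨N, hN⟩ := exists_nat_gt (max (2 * (S : ℝ)) (Real.exp K2))
  have hN1 : 2 * (S : ℝ) < N := lt_of_le_of_lt (le_max_left _ _) hN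
  have hN2 : Real.exp K2 < N := lt_of_le_of_lt (le_max_right _ _) hN
  have hSr : (1 : ℝ) ≤ S := by exact_mod_cast hS1
  have hDr : (1 : ℝ) ≤ D := by exact_mod_cast hD
  have hN0 : (1 : ℝ) ≤ N := by linarith
  have hN0' : 1 ≤ N := by exact_mod_cast hN0
  refine ⟨S, N, hS1, hN0', ?_⟩
  intro L hL P hP T hT
  have hTr : ((N : ℝ)) ^ D ≤ T := by exact_mod_cast hT
  have hT1 : (1 : ℝ) ≤ T := (one_le_pow₀ hN0).trans hTr
  have hT0 : (0 : ℝ) < T := by linarith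
  set R : ℝ := (T : ℝ) ^ ((1 : ℝ) / D) with hR
  have hRD : R ^ D = T := by
    rw [hR, ← Real.rpow_natCast, ← Real.rpow_mul hT0.le]
    rw [one_div_mul_cancel (by positivity), Real.rpow_one]
  have hR0 : 0 < R := by positivity
  have hNR : (N : ℝ) ≤ R := by
    by_contra! hcon
    have : R ^ D < (N : ℝ) ^ D := pow_lt_pow_left₀ hcon hR0.le (by omega)
    linarith
  have hR1 : 1 ≤ R := hN0.trans hNR
  refine ⟨R, by linarith, ?_⟩
  have hLr : (L : ℝ) = 2 * S * (N : ℝ) ^ (D - 1) := by rw [hL]; push_cast; ring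
  have hL1 : (1 : ℝ) ≤ L := by
    have : (1 : ℝ) ≤ (N : ℝ) ^ (D - 1) := one_le_pow₀ hN0
    rw [hLr]
    exact one_le_mul_of_one_le_of_one_le (by linarith) this
  have hLR : L * R ≤ 2 * S * T := by
    rw [hLr, ← hRD]
    have e : R ^ D = R ^ (D - 1) * R := by
      rw [← pow_succ]; congr 1; omega
    rw [e, ← mul_assoc (2 * (S : ℝ))]
    gcongr
  have hLT : (L : ℝ) ≤ 2 * S * T :=
    (le_mul_of_one_le_right (by positivity) hR1).trans hLR
  obtain ⟨l, hl⟩ : ∃ x, x = Real.log T := ⟨_, rfl⟩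
  have hl0 : 0 ≤ l := hl ▸ Real.log_nonneg hT1
  obtain ⟨ll, hll⟩ : ∃ x, x = Real.log L := ⟨_, rfl⟩
  have hll0 : 0 ≤ ll := hll ▸ Real.log_nonneg hL1
  have hlls : ll ≤ l + s := by
    rw [hll, hl, hs, add_comm, ← Real.log_mul (by positivity) (by positivity)]
    exact Real.log_le_log (by positivity) hLT
  have hs0 : 0 ≤ s := hs ▸ Real.log_nonneg (by linarith)
  have hlo : 0 ≤ lo := dlo ▸ Real.log_nonneg hOm
  have hlC2 : 0 ≤ lC2 := dlC2 ▸ Real.log_nonneg hC2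
  have hlCd : 0 ≤ lCd := dlCd ▸ Real.log_nonneg hCd
  have hlCx : 0 ≤ lCx := dlCx ▸ Real.log_nonneg hCx
  have hlc : 0 ≤ lc := dlc ▸ Real.log_nonneg hc1
  have hPpos : 0 < P := by rw [hP]; positivity
  have hlK : K2 < l := by
    rw [hl, Real.lt_log_iff_exp_lt hT0]
    calc _ < (N : ℝ) := hN2
      _ ≤ (N : ℝ) ^ D := le_self_pow₀ hN0 (by omega)
      _ ≤ T := hTr
  have hlogP : Real.log P = 2 * lc + D * ll + D * (N : ℝ) ^ D * (lo + ll) + L * S * lC2 := by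
    rw [hP, Real.log_mul (by positivity) (by positivity),
      Real.log_mul (by positivity) (by positivity), Real.log_mul (by positivity) (by positivity),
      Real.log_pow, Real.log_pow, Real.log_pow, Real.log_pow,
      Real.log_mul (by positivity) (by positivity), ← hll, ← dlo, ← dlC2, ← dlc]
    push_cast
    ring
  have hLSC : L * S * lC2 ≤ T * (2 * S * S * lC2) := by
    have : L * (S * lC2) ≤ (2 * S * T) * (S * lC2) := by gcongr
    linarith
  have hDll : D * ll ≤ T * (D * (l + s)) := by
    have h1 : D * ll ≤ D * (l + s) := by gcongr
    have h2 : 0 ≤ D * (l + s) := by positivity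
    exact h1.trans (le_mul_of_one_le_left h2 hT1)
  have hPle : Real.log P ≤ T * (2 * D * l + K1) := by
    rw [hlogP, hK1]
    have h1 : 2 * lc ≤ T * (2 * lc) := le_mul_of_one_le_left (by positivity) hT1
    have h3 : D * (N : ℝ) ^ D * (lo + ll) ≤ T * (D * (lo + (l + s))) := by
      calc D * (N : ℝ) ^ D * (lo + ll) ≤ D * T * (lo + (l + s)) := by gcongr
        _ = _ := by ring
    linarith
  have hQ : Real.log ((L : ℝ) ^ D * P * (Om * L) ^ T * C2 ^ (L * S))
      ≤ T * ((3 * D + 1) * l + (D * s + K1 + lo + s + 2 * S * S * lC2)) := by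
    rw [Real.log_mul (by positivity) (by positivity),
      Real.log_mul (by positivity) (by positivity), Real.log_mul (by positivity) (by positivity),
      Real.log_pow, Real.log_pow, Real.log_pow,
      Real.log_mul (by positivity) (by positivity), ← hll, ← dlo, ← dlC2]
    push_cast
    have h1 : (T : ℝ) * (lo + ll) ≤ T * (lo + (l + s)) := by gcongr
    linarith
  have hexpo : Cx * L * (D * S + R) ≤ T * (Cx * (2 * S * (D * S) + 2 * S)) := by
    have h1 : (L : ℝ) * (D * S) ≤ 2 * S * T * (D * S) := by gcongr
    have h2 : L * (D * S) + L * R ≤ 2 * S * T * (D * S) + 2 * S * T := by linarith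
    calc Cx * L * (D * S + R) = Cx * (L * (D * S) + L * R) := by ring
      _ ≤ Cx * (2 * S * T * (D * S) + 2 * S * T) := by gcongr
      _ = _ := by ring
  rw [← Real.log_neg_iff (by positivity)]
  rw [Real.log_mul (by positivity) (by positivity),
    Real.log_mul (by positivity) (by positivity), Real.log_mul (by positivity) (by positivity),
    Real.log_mul (by positivity) (by positivity), Real.log_mul (by positivity) (by positivity),
    Real.log_mul (by positivity) (by positivity), Real.log_mul (by positivity) (by positivity),
    Real.log_mul (by positivity) (by positivity),
    Real.log_pow, Real.log_pow, Real.log_pow, Real.log_pow, Real.log_pow,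
    Real.log_exp, Real.log_rpow (by positivity), Real.log_div (by positivity) hR0.ne',
    Real.log_mul (by positivity : Cx ≠ 0) (by positivity), Real.log_pow]
  have hlR : Real.log R = l / D := by
    rw [hR, Real.log_rpow hT0, ← hl]; ring
  rw [hlR, ← hl, ← hll, ← dlC2, ← dlCd, ← dlCx, ← hs]
  have h1 : ((D - 1 : ℕ) : ℝ) * Real.log ((L : ℝ) ^ D * P * (Om * L) ^ T * C2 ^ (L * S)) ≤
    ((D - 1 : ℕ) : ℝ) * (T * ((3 * D + 1) * l + (D * s + K1 + lo + s + 2 * S * S * lC2))) := by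
    gcongr
  have h2 : (T : ℝ) * (lCx + ll) ≤ T * (lCx + (l + s)) := by gcongr
  have h3 : (T : ℝ) * S / D * (s - l / D) = T * (S * s / D) - T * (l * (S / D ^ 2)) := by
    field_simp
  rw [h3, hSeq]
  have hfin : (T : ℝ) * (K2 - l) < 0 := mul_neg_of_pos_of_neg hT0 (by linarith)
  rw [hK2] at hfin
  push_cast
  linarith

end partA3

section partA4
open Filter Topology Finset NumberField

theorem bk_house_le_iff {K : Type*} [Field K] [NumberField K] (x : K) (c : ℝ) :
    house x ≤ c ↔ ∀ ψ : K →+* ℂ, ‖ψ x‖ ≤ c := by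
  constructor
  · intro h ψ
    exact (norm_embedding_le_house x ψ).trans h
  · intro h
    have h0 : 0 ≤ c := (norm_nonneg _).trans (h (Classical.arbitrary _))
    unfold house
    rw [pi_norm_le_iff_of_nonneg h0]
    exact h

theorem bk_siegel (K : Type*) [Field K] [NumberField K] : ∃ c1 : ℝ, 1 ≤ c1 ∧
    ∀ (α β : Type) [Fintype α] [Fintype β] (a : Matrix α β (𝓞 K)) (A : ℝ), 1 ≤ A →
      0 < Fintype.card α → 2 * Fintype.card α ≤ Fintype.card β →
      (∀ k l, house ((a k l : 𝓞 K) : K) ≤ A) →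
      ∃ ξ : β → 𝓞 K, ξ ≠ 0 ∧ a.mulVec ξ = 0 ∧
        ∀ l, house ((ξ l : 𝓞 K) : K) ≤ c1 * (c1 * Fintype.card β * A) := by
  classical
  have key : ∃ c : ℝ, ∀ (α β : Type) [Fintype α] [Fintype β] (a : Matrix α β (𝓞 K)) (A : ℝ), 
      0 ≤ A → a ≠ 0 →
      0 < Fintype.card α → Fintype.card α < Fintype.card β →
      (∀ k l, house ((a k l : 𝓞 K) : K) ≤ A) →
      ∃ ξ : β → 𝓞 K, ξ ≠ 0 ∧ a.mulVec ξ = 0 ∧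
        ∀ l, house ((ξ l : 𝓞 K) : K) ≤ c * ((c * Fintype.card β * A) ^
          ((Fintype.card α : ℝ) / (Fintype.card β - Fintype.card α))) := by
    exact ⟨_, fun α β _ _ a A hA ha h0 h1 h2 =>
      NumberField.house.exists_ne_zero_int_vec_house_le K a ha h0 h1 rfl h2 rfl⟩
  obtain ⟨c, hc⟩ := key
  refine ⟨max 1 |c|, le_max_left _ _, ?_⟩
  intro α β _ _ a A hA h0 h1 h2
  have hm : (1 : ℝ) ≤ max 1 |c| := le_max_left _ _
  have hb1 : (1 : ℝ) ≤ Fintype.card β := by exact_mod_cast (by omega : 1 ≤ Fintype.card β)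
  have hbase : 1 ≤ max 1 |c| * Fintype.card β * A :=
    one_le_mul_of_one_le_of_one_le (one_le_mul_of_one_le_of_one_le hm hb1) hA
  by_cases ha : a = 0
  · refine ⟨fun _ => 1, ?_, by simp [ha], ?_⟩
    · have : Nonempty β := Fintype.card_pos_iff.1 (by omega)
      intro h
      have := congrFun h (Classical.arbitrary β)
      simp at this
    · intro l
      have : house ((1 : 𝓞 K) : K) = 1 := by simpa using house_intCast (K := K) 1
      rw [this]
      exact one_le_mul_of_one_le_of_one_le hm hbase
  obtain ⟨ξ, hξ, hξ2, hξ3⟩ := hc α β a A (by linarith) ha h0 (by omega) h2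
  refine ⟨ξ, hξ, hξ2, fun l => (hξ3 l).trans ?_⟩
  have hexp : (Fintype.card α : ℝ) / (Fintype.card β - Fintype.card α) ≤ 1 := by
    have h3 : 2 * (Fintype.card α : ℝ) ≤ Fintype.card β := by exact_mod_cast h1
    have h4 : (0 : ℝ) < Fintype.card α := by exact_mod_cast h0
    rw [div_le_one (by linarith)]
    linarith
  have hexp0 : 0 ≤ (Fintype.card α : ℝ) / (Fintype.card β - Fintype.card α) := by
    have h3 : 2 * (Fintype.card α : ℝ) ≤ Fintype.card β := by exact_mod_cast h1
    have h4 : (0 : ℝ) < Fintype.card α := by exact_mod_cast h0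
    apply div_nonneg <;> linarith
  calc _ ≤ |c| * |(c * Fintype.card β * A) ^
          ((Fintype.card α : ℝ) / (Fintype.card β - Fintype.card α))| := by
        rw [← abs_mul]; exact le_abs_self _
    _ ≤ max 1 |c| * (max 1 |c| * Fintype.card β * A) ^
          ((Fintype.card α : ℝ) / (Fintype.card β - Fintype.card α)) := by
        gcongr
        · exact le_max_right _ _
        · refine (Real.abs_rpow_le_abs_rpow _ _).trans ?_
          apply Real.rpow_le_rpow (abs_nonneg _) _ hexp0
          rw [abs_mul, abs_mul, abs_of_nonneg (by linarith : 0 ≤ A), Nat.abs_cast]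
          gcongr
          exact le_max_right _ _
    _ ≤ _ := by
        gcongr
        exact Real.rpow_le_self_of_one_le hbase hexp

theorem bk_denom {K : Type*} [Field K] [NumberField K] (x : K) :
    ∃ d : ℕ, 1 ≤ d ∧ IsIntegral ℤ ((d : K) * x) := by
  have : IsAlgebraic ℤ x := by
    have := (Algebra.IsAlgebraic.isAlgebraic (R := ℚ) x)
    exact (IsFractionRing.isAlgebraic_iff ℤ ℚ K).2 this
  obtain ⟨y, hy, h⟩ := this.exists_integral_multiple
  refine ⟨y.natAbs, Nat.one_le_iff_ne_zero.2 (Int.natAbs_ne_zero.2 hy), ?_⟩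
  rw [zsmul_eq_mul] at h
  rcases Int.natAbs_eq y with h1 | h1
  · rw [h1] at h; simpa using h
  · rw [h1] at h
    have := h.neg
    simpa using this

theorem bk_zpow {K : Type*} [Field K] [NumberField K] {ι : Type*} [Fintype ι] (al : ι → K) :
    ∃ (δ : ℕ) (W : ℝ), 1 ≤ δ ∧ (δ : ℝ) ≤ W ∧ ∀ i (n : ℤ) (E : ℕ), |n| ≤ E →
      IsIntegral ℤ ((δ : K) ^ E * al i ^ n) ∧ house ((δ : K) ^ E * al i ^ n) ≤ W ^ E := by
  choose d hd1 hd2 using fun i => bk_denom (al i)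
  choose d' hd1' hd2' using fun i => bk_denom (al i)⁻¹
  set δ : ℕ := ∏ i, (d i * d' i) with hδ
  have hδ1 : 1 ≤ δ := Finset.one_le_prod' (fun i _ => Nat.mul_pos (hd1 i) (hd1' i))
  have hint : ∀ i, IsIntegral ℤ ((δ : K) * al i) := by
    intro i
    obtain ⟨c, hc⟩ : d i ∣ δ := (Dvd.intro _ rfl).trans (Finset.dvd_prod_of_mem _ (mem_univ i))
    rw [hc]
    have := (isIntegral_algebraMap (R := ℤ) (A := K) (x := (c : ℤ))).mul (hd2 i)
    have e : ((c : ℤ) : K) = (c : K) := by push_cast; rfl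
    rw [eq_intCast, e] at this
    have e2 : ((d i * c : ℕ) : K) * al i = (c : K) * ((d i : K) * al i) := by
      push_cast; ring
    rw [e2]
    exact this
  have hint' : ∀ i, IsIntegral ℤ ((δ : K) * (al i)⁻¹) := by
    intro i
    obtain ⟨c, hc⟩ : d' i ∣ δ := (Dvd.intro_left _ rfl).trans (Finset.dvd_prod_of_mem _ (mem_univ i))
    rw [hc]
    have := (isIntegral_algebraMap (R := ℤ) (A := K) (x := (c : ℤ))).mul (hd2' i)
    have e : ((c : ℤ) : K) = (c : K) := by push_cast; rfl
    rw [eq_intCast, e] at this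
    have e2 : ((d' i * c : ℕ) : K) * (al i)⁻¹ = (c : K) * ((d' i : K) * (al i)⁻¹) := by
      push_cast; ring
    rw [e2]
    exact this
  clear_value δ
  have hδi : IsIntegral ℤ (δ : K) := by
    simpa using (isIntegral_algebraMap (R := ℤ) (A := K) (x := (δ : ℤ)))
  have hδh : house (δ : K) = δ := by simpa using house_intCast (K := K) δ
  set W : ℝ := δ + ∑ i, (house ((δ : K) * al i) + house ((δ : K) * (al i)⁻¹)) with hW
  have hnn : ∀ i, 0 ≤ house ((δ : K) * al i) + house ((δ : K) * (al i)⁻¹) := fun i =>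
    add_nonneg (house_nonneg _) (house_nonneg _)
  have hWd : (δ : ℝ) ≤ W := by
    rw [hW]; linarith [Finset.sum_nonneg (fun i (_ : i ∈ univ) => hnn i)]
  have hsingle : ∀ i, house ((δ : K) * al i) + house ((δ : K) * (al i)⁻¹) ≤ W := by
    intro i
    have := Finset.single_le_sum (fun i (_ : i ∈ univ) => hnn i) (mem_univ i)
    have h2 : (0 : ℝ) ≤ δ := by positivity
    rw [hW]; linarith
  clear_value W
  have hW0 : 0 ≤ W := le_trans (by positivity) hWd
  have aux : ∀ (y : K) (hy : IsIntegral ℤ ((δ : K) * y)) (hh : house ((δ : K) * y) ≤ W) (n E : ℕ),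
      n ≤ E → IsIntegral ℤ ((δ : K) ^ E * y ^ n) ∧ house ((δ : K) ^ E * y ^ n) ≤ W ^ E := by
    intro y hy hh n E hn
    have e : (δ : K) ^ E * y ^ n = (δ : K) ^ (E - n) * ((δ : K) * y) ^ n := by
      rw [mul_pow, ← mul_assoc, ← pow_add]; congr 2; omega
    rw [e]
    refine ⟨(hδi.pow _).mul (hy.pow _), ?_⟩
    refine (house_mul_le _ _).trans ?_
    have e2 : W ^ E = W ^ (E - n) * W ^ n := by rw [← pow_add]; congr 1; omega
    rw [e2]
    apply mul_le_mul _ _ (house_nonneg _) (by positivity)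
    · refine (house_pow_le _ _).trans ?_
      rw [hδh]
      gcongr
    · refine (house_pow_le _ _).trans ?_
      have := house_nonneg ((δ : K) * y)
      gcongr
  refine ⟨δ, W, hδ1, hWd, ?_⟩
  intro i n E hn
  rcases le_total 0 n with h | h
  · lift n to ℕ using h
    rw [zpow_natCast]
    apply aux _ (hint i) _ n E (by simpa using hn)
    linarith [hsingle i, house_nonneg ((δ : K) * (al i)⁻¹)]
  · obtain ⟨m, rfl⟩ : ∃ m : ℕ, n = -(m : ℤ) := ⟨n.natAbs, by omega⟩
    rw [zpow_neg, zpow_natCast, ← inv_pow]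
    apply aux _ (hint' i) _ m E (by simpa using hn)
    linarith [hsingle i, house_nonneg ((δ : K) * (al i))]

open Classical in
theorem bk_dual (K : Type*) [Field K] [NumberField K] (φ : K →+* ℂ) :
    ∃ d : (K ≃ₐ[ℚ] K) → Module.Free.ChooseBasisIndex ℤ (𝓞 K) → ℂ, ∀ σ τ : K ≃ₐ[ℚ] K,
      ∑ k, d σ k * φ (τ (integralBasis K k)) = if σ = τ then 1 else 0 := by
  classical
  have hli : LinearIndependent ℂ (fun τ : K ≃ₐ[ℚ] K => (fun x : K => φ (τ x))) := by
    have h1 := linearIndependent_monoidHom K ℂ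
    have h2 : Function.Injective (fun τ : K ≃ₐ[ℚ] K =>
        ((φ : K →* ℂ).comp ((τ : K →+* K) : K →* K))) := by
      intro σ τ h
      ext x
      have := DFunLike.congr_fun h x
      exact φ.injective this
    have h3 := h1.comp _ h2
    rw [Fintype.linearIndependent_iff] at h3 ⊢
    intro c hc
    exact h3 c hc
  let f : ((K ≃ₐ[ℚ] K) → ℂ) →ₗ[ℂ] (Module.Free.ChooseBasisIndex ℤ (𝓞 K) → ℂ) :=
    Matrix.mulVecLin (Matrix.of fun k τ => φ (τ (integralBasis K k)))
  have hf : LinearMap.ker f = ⊥ := by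
    rw [LinearMap.ker_eq_bot']
    intro c hc
    rw [Fintype.linearIndependent_iff] at hli
    funext σ
    apply hli c _ σ
    funext x
    have hk : ∀ k, ∑ τ, c τ * φ (τ (integralBasis K k)) = 0 := by
      intro k
      have := congrFun hc k
      simpa [f, Matrix.mulVec, dotProduct, mul_comm] using this
    rw [← (integralBasis K).sum_repr x]
    simp only [Finset.sum_apply, Pi.smul_apply, smul_eq_mul, map_sum, Pi.zero_apply,
      Finset.mul_sum]
    rw [Finset.sum_comm]
    apply Finset.sum_eq_zero
    intro k _
    have : ∀ τ : K ≃ₐ[ℚ] K, c τ * φ (τ ((integralBasis K).repr x k • (integralBasis K k)))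
        = ((integralBasis K).repr x k : ℂ) * (c τ * φ (τ (integralBasis K k))) := by
      intro τ
      rw [Algebra.smul_def, map_mul, map_mul, AlgEquiv.commutes, eq_ratCast, map_ratCast]
      ring
    simp only [this, ← Finset.mul_sum, hk, mul_zero]
  obtain ⟨g, hg⟩ := f.exists_leftInverse_of_injective hf
  refine ⟨fun σ k => g (Pi.single k 1) σ, fun σ τ => ?_⟩
  have h1 := LinearMap.congr_fun hg (Pi.single τ 1)
  have h2 : f (Pi.single τ 1) = ∑ k, φ (τ (integralBasis K k)) • Pi.single k (1 : ℂ) := by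
    funext k
    simp [f, Pi.single_apply, Finset.sum_apply]
  rw [LinearMap.comp_apply, h2, map_sum] at h1
  have h3 := congrFun h1 σ
  simp only [map_smul, Finset.sum_apply, Pi.smul_apply, smul_eq_mul, LinearMap.id_apply,
    Pi.single_apply] at h3
  rw [← h3]
  exact Finset.sum_congr rfl fun k _ => mul_comm _ _

theorem bk_vander {K B : Type*} [Field K] [Fintype B] (x : B → K) (hx : Function.Injective x)
    (c : B → K) (h : ∀ n : ℕ, ∑ b, c b * x b ^ n = 0) : c = 0 := by
  have h1 := linearIndependent_monoidHom (Multiplicative ℕ) K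
  have h2 : Function.Injective (fun b : B => powersHom K (x b)) := by
    intro a b hab
    exact hx ((powersHom K).injective hab)
  have h3 := h1.comp _ h2
  rw [Fintype.linearIndependent_iff] at h3
  funext b
  apply h3 c _ b
  funext n
  simpa [Finset.sum_apply] using h n.toAdd

end partA4

section partA5
open Filter Topology Finset NumberField

theorem bk_listprod {J M : Type*} [CommMonoid M] [Fintype J] [DecidableEq J] (v : List J) (g : J → M) :
    (v.map g).prod = ∏ j, g j ^ v.count j := by
  rw [Finset.prod_list_map_count]
  apply Finset.prod_subset (Finset.subset_univ _)
  intro j _ hj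
  rw [List.mem_toFinset] at hj
  rw [List.count_eq_zero_of_not_mem hj, pow_zero]

theorem bk_listint {J K : Type*} [Field K] (v : List J) (g : J → K) (h : ∀ j, IsIntegral ℤ (g j)) :
    IsIntegral ℤ (v.map g).prod := by
  induction v with
  | nil => simpa using isIntegral_one
  | cons a v ih => rw [List.map_cons, List.prod_cons]; exact (h a).mul ih

theorem bk_listnorm {J : Type*} (v : List J) (g : J → ℂ) (c : ℝ) (h : ∀ j, ‖g j‖ ≤ c) :
    ‖(v.map g).prod‖ ≤ c ^ v.length := by
  induction v with
  | nil => simp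
  | cons a v ih =>
    have : 0 ≤ c := (norm_nonneg _).trans (h a)
    rw [List.map_cons, List.prod_cons, norm_mul, List.length_cons, pow_succ']
    exact mul_le_mul (h a) ih (norm_nonneg _) this

theorem bk_normge {K : Type*} [Field K] [NumberField K] (φ : K →+* ℂ) (x : K) (hx : IsIntegral ℤ x)
    (h0 : x ≠ 0) (a b : ℝ) (ha : ‖φ x‖ ≤ a) (hb : house x ≤ b) :
    1 ≤ a * b ^ (Module.finrank ℚ K - 1) := by
  have h1 := norm_norm_le_norm_mul_house_pow x φ
  have h2 : 1 ≤ ‖Algebra.norm ℚ x‖ := by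
    obtain ⟨n, hn⟩ : ∃ n : ℤ, (n : ℚ) = Algebra.norm ℚ x :=
      ⟨_, Algebra.coe_norm_int (K := K) ⟨x, hx⟩⟩
    have hne : n ≠ 0 := by
      intro h
      rw [h, Int.cast_zero] at hn
      exact h0 (Algebra.norm_eq_zero_iff.1 hn.symm)
    have := Int.one_le_abs hne
    rw [← hn, Int.norm_cast_rat, Int.norm_eq_abs]
    exact_mod_cast this
  have h3 : 0 ≤ a := (norm_nonneg _).trans ha
  have h4 := house_nonneg x
  calc 1 ≤ _ := h2
    _ ≤ _ := h1
    _ ≤ _ := by gcongr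

theorem bk_card (D r S N L : ℕ) (hr : r + 1 ≤ D) (hN : 1 ≤ N) (hL : L = 2 * S * N ^ (D - 1)) :
    2 * ((N ^ D) ^ r * S ^ D) ≤ L ^ D := by
  rw [hL, mul_pow, mul_pow, ← pow_mul, ← pow_mul]
  have h1 : 2 ≤ 2 ^ D := by
    calc 2 = 2 ^ 1 := rfl
      _ ≤ 2 ^ D := Nat.pow_le_pow_right (by norm_num) (by omega)
  have h2 : N ^ (D * r) ≤ N ^ ((D - 1) * D) := by
    apply Nat.pow_le_pow_right hN
    rw [mul_comm]
    exact Nat.mul_le_mul_right _ (by omega)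
  calc 2 * (N ^ (D * r) * S ^ D) ≤ 2 ^ D * (N ^ ((D - 1) * D) * S ^ D) := by gcongr
    _ = _ := by ring

theorem bk_core (K : Type) [Field K] [NumberField K] (φ : K →+* ℂ) {I J : Type} [Fintype I]
    [Fintype J] [DecidableEq I] [DecidableEq J]
    (hI : Fintype.card I = Module.finrank ℚ K) (hJ : Fintype.card J + 1 ≤ Module.finrank ℚ K)
    (Om C2 Cd Cx : ℝ) (hOm : 1 ≤ Om) (hC2 : 1 ≤ C2) (hCd1 : 1 ≤ Cd) (hCx : 1 ≤ Cx)
    (u : (I → ℕ) → J → K) (hu : ∀ m j, IsIntegral ℤ (u m j))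
    (huh : ∀ (L : ℕ) m, (∀ k, m k < L) → ∀ j, house (u m j) ≤ Om * L)
    (X : (I → ℕ) → I → ℂ) (hX : ∀ (L : ℕ) m, (∀ k, m k < L) → ∀ k, ‖X m k‖ ≤ Cx * L)
    (d : J → I → ℂ) (e : I → J → ℂ) (hd : ∀ m j, φ (u m j) = ∑ k, d j k * X m k)
    (he : ∀ m k, X m k = ∑ j, e k j * φ (u m j))
    (hCd : ∀ j, ∑ k, ‖d j k‖ ≤ Cd)
    (j0 : J) (hj0 : Function.Injective fun m => u m j0)
    (hB : ∀ L S : ℕ, 1 ≤ L → 1 ≤ S → ∃ (B : (I → ℕ) → (I → ℕ) → K) (Δ : ℝ),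
      0 < Δ ∧ Δ ≤ C2 ^ (L * S) ∧ ∀ m s, (∀ k, m k < L) → (∀ k, s k < S) →
      IsIntegral ℤ (B m s) ∧ house (B m s) ≤ C2 ^ (L * S) ∧
      φ (B m s) = Δ * Complex.exp (∑ k, X m k * s k)) : False := by
  obtain ⟨c1, hc1, hsieg⟩ := bk_siegel K
  obtain ⟨D, hD⟩ : ∃ D, D = Module.finrank ℚ K := ⟨_, rfl⟩
  rw [← hD] at hI hJ
  obtain ⟨S, N, hS, hN, hgr⟩ := bk_growth D (by omega) Om c1 C2 Cd Cx hOm hc1 hC2 hCd1 hCx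
  obtain ⟨L, hL⟩ : ∃ L, L = 2 * S * N ^ (D - 1) := ⟨_, rfl⟩
  obtain ⟨P, hP⟩ : ∃ P, P = c1^2 * (L : ℝ)^D * (Om*L)^(D*N^D) * C2^(L*S) := ⟨_, rfl⟩
  have hgr := hgr L hL P hP
  have hL1 : 1 ≤ L := by
    rw [hL]
    exact Nat.mul_pos (Nat.mul_pos (by norm_num) hS) (Nat.pow_pos hN)
  have hL1r : (1 : ℝ) ≤ L := by exact_mod_cast hL1
  have hOL : 1 ≤ Om * L := one_le_mul_of_one_le_of_one_le hOm hL1r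
  have hCL : 1 ≤ Cx * L := one_le_mul_of_one_le_of_one_le hCx hL1r
  have hP0 : 0 ≤ P := by rw [hP]; positivity
  have hCC : 1 ≤ C2 ^ (L * S) := one_le_pow₀ hC2
  obtain ⟨B, Δ, hΔ0, hΔ, hB⟩ := hB L S hL1 hS
  have hmL : ∀ (m : I → Fin L) k, ((fun k => (m k : ℕ)) k) < L := fun m k => (m k).2
  -- Siegel
  obtain ⟨ξ, hξ0, hξ, hξh⟩ := hsieg ((J → Fin (N ^ D)) × (I → Fin S)) (I → Fin L)
    (fun x m => ⟨(∏ j, u (fun k => m k) j ^ (x.1 j : ℕ)) * B (fun k => m k) (fun k => x.2 k), by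
      apply IsIntegral.mul
      · exact IsIntegral.prod _ fun j _ => (hu _ j).pow _
      · exact (hB _ _ (hmL m) (fun k => (x.2 k).2)).1⟩)
    ((Om * L) ^ (D * N ^ D) * C2 ^ (L * S))
    (one_le_mul_of_one_le_of_one_le (one_le_pow₀ hOL) hCC)
    (by
      have : 0 < N ^ D := Nat.pow_pos hN
      have : Nonempty (Fin (N ^ D)) := ⟨⟨0, this⟩⟩
      have : Nonempty (Fin S) := ⟨⟨0, hS⟩⟩
      exact Fintype.card_pos)
    (by
      simp only [Fintype.card_prod, Fintype.card_pi, Fintype.card_fin, Finset.prod_const,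
        Finset.card_univ, hI]
      exact bk_card D _ S N L hJ hN hL)
    (by
      intro x m
      change house ((∏ j, u (fun k => m k) j ^ (x.1 j : ℕ)) * B (fun k => m k) (fun k => x.2 k)) ≤ _
      obtain ⟨-, hb2, -⟩ := hB _ _ (hmL m) (fun k => (x.2 k).2)
      rw [bk_house_le_iff]
      intro ψ
      rw [map_mul, norm_mul, map_prod, norm_prod]
      apply mul_le_mul _ ((norm_embedding_le_house _ _).trans hb2) (norm_nonneg _) (by positivity)
      calc _ ≤ ∏ j : J, (Om * L) ^ (N ^ D) := by
            apply Finset.prod_le_prod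
            · intro j _; exact norm_nonneg _
            · intro j _
              rw [map_pow, norm_pow]
              calc _ ≤ (Om * L) ^ (x.1 j : ℕ) := by
                    apply pow_le_pow_left₀ (norm_nonneg _)
                    exact (norm_embedding_le_house _ _).trans (huh L _ (hmL m) j)
                _ ≤ _ := pow_le_pow_right₀ hOL (x.1 j).2.le
        _ = (Om * L) ^ (Fintype.card J * N ^ D) := by
            rw [Finset.prod_const, ← pow_mul, Finset.card_univ, mul_comm (N ^ D)]
        _ ≤ _ := by
            apply pow_le_pow_right₀ hOL
            exact Nat.mul_le_mul_right _ (by omega))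
  have hξh' : ∀ m, house ((ξ m : 𝓞 K) : K) ≤ P := by
    intro m
    refine (hξh m).trans (le_of_eq ?_)
    rw [hP]
    simp only [Fintype.card_pi, Fintype.card_fin, Finset.prod_const, Finset.card_univ, hI]
    push_cast
    ring
  obtain ⟨G, hG⟩ : ∃ G : List J → (I → ℕ) → K, ∀ v s, G v s = ∑ m : I → Fin L,
      (ξ m : K) * B (fun k => m k) s * (v.map (u (fun k => m k))).prod := ⟨_, fun _ _ => rfl⟩
  have hGv : ∀ v s, v.length < N ^ D → (∀ k, s k < S) → G v s = 0 := by
    intro v s hv hs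
    have h1 := congrFun hξ (fun j => ⟨v.count j, lt_of_le_of_lt List.count_le_length hv⟩,
      fun k => ⟨s k, hs k⟩)
    have h2 := congrArg (fun z : 𝓞 K => (z : K)) h1
    simp only [Matrix.mulVec, dotProduct, map_sum, map_mul, Pi.zero_apply, map_zero] at h2
    rw [hG, ← h2]
    apply Finset.sum_congr rfl
    intro m _
    rw [bk_listprod]
    change _ = ((∏ j, u (fun k => m k) j ^ v.count j) * B (fun k => m k) (fun k => s k)) * _
    rw [mul_right_comm, mul_assoc, mul_comm]
    congr 1
  have hGex : ∃ T, ∃ v s, v.length = T ∧ (∀ k, s k < S) ∧ G v s ≠ 0 := by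
    by_contra hcon
    push Not at hcon
    apply hξ0
    have hz : ∀ k : I, (fun _ : I => (0 : ℕ)) k < S := fun _ => hS
    have := bk_vander (fun m : I → Fin L => u (fun k => m k) j0) (by
        intro m m' h
        have := hj0 h
        funext k
        exact Fin.ext (congrFun this k))
      (fun m => (ξ m : K) * B (fun k => m k) (fun _ => 0)) (by
        intro n
        have := hcon n (List.replicate n j0) (fun _ => 0) List.length_replicate hz
        rw [hG] at this
        simpa using this)
    funext m
    have h1 := congrFun this m
    simp only [Pi.zero_apply, mul_eq_zero] at h1
    rcases h1 with h1 | h1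
    · exact RingOfIntegers.ext h1
    · exfalso
      have h2 := (hB _ _ (hmL m) hz).2.2
      rw [h1, map_zero] at h2
      exact mul_ne_zero (by exact_mod_cast hΔ0.ne') (Complex.exp_ne_zero _) h2.symm
  classical
  obtain ⟨T, hT, hTmin⟩ : ∃ T, (∃ v s, v.length = T ∧ (∀ k, s k < S) ∧ G v s ≠ 0) ∧
      ∀ v s, v.length < T → (∀ k, s k < S) → G v s = 0 := by
    refine ⟨Nat.find hGex, Nat.find_spec hGex, fun v s hv hs => ?_⟩
    by_contra h
    exact Nat.find_min hGex hv ⟨v, s, rfl, hs, h⟩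
  obtain ⟨v0, s0, hv0, hs0, hG0⟩ := hT
  have hTN : N ^ D ≤ T := by
    by_contra h
    exact hG0 (hGv v0 s0 (by omega) hs0)
  have hT0 : 0 < T := lt_of_lt_of_le (Nat.pow_pos hN) hTN
  obtain ⟨R, hR, hlt⟩ := hgr T hTN
  -- complex version
  have hφG : ∀ v s, (∀ k, s k < S) → φ (G v s) = Δ * ∑ m : I → Fin L,
      (φ (ξ m : K) * Complex.exp (∑ k, X (fun k => m k) k * s k)) *
        (v.map (fun j => φ (u (fun k => m k) j))).prod := by
    intro v s hs
    rw [hG, map_sum, Finset.mul_sum]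
    apply Finset.sum_congr rfl
    intro m _
    rw [map_mul, map_mul, (hB _ s (hmL m) hs).2.2, map_list_prod, List.map_map]
    change _ * (List.map (fun j => φ (u (fun k => m k) j)) v).prod = _
    ring
  have hΔne : (Δ : ℂ) ≠ 0 := by exact_mod_cast hΔ0.ne'
  have hvan : ∀ l : List I, l.length < T → ∀ s : I → ℕ, (∀ k, s k < S) →
      ∑ m : I → Fin L, φ (ξ m : K) * Complex.exp (∑ k, X (fun k => m k) k * s k) *
        (l.map (X (fun k => m k))).prod = 0 := by
    intro l hl s hs
    have := bk_change (fun (m : I → Fin L) j => φ (u (fun k => m k) j))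
      (fun (m : I → Fin L) k => X (fun k => m k) k) e (fun m k => he _ k)
      (∑ k, ∑ j, ‖e k j‖) (fun k => Finset.single_le_sum (f := fun k => ∑ j, ‖e k j‖)
        (fun k _ => Finset.sum_nonneg fun j _ => norm_nonneg _) (mem_univ k))
      (Finset.sum_nonneg fun k _ => Finset.sum_nonneg fun j _ => norm_nonneg _) 0 le_rfl l.length
      (fun m => φ (ξ m : K) * Complex.exp (∑ k, X (fun k => m k) k * s k))
      (by
        intro v hv
        have h1 := hφG v s hs
        rw [hTmin v s (by omega) hs, map_zero] at h1
        have h2 := (mul_eq_zero.1 h1.symm).resolve_left hΔne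
        rw [h2, norm_zero]) l rfl
    rw [mul_zero] at this
    exact norm_le_zero_iff.1 this
  have han := bk_analytic (fun (m : I → Fin L) k => X (fun k => m k) k) (fun m => φ (ξ m : K)) T S hT0
    (Cx * L) P R hCL hP0 (fun m k => hX L _ (hmL m) k)
    (fun m => (norm_embedding_le_house _ _).trans (hξh' m)) hR hvan
  obtain ⟨M, hM⟩ : ∃ M : ℝ, M = (T:ℝ)^T * ((L:ℝ)^D * P * (Cx*L)^T * Real.exp (Cx*L*(D*S+R)))
    * (2*S/R)^((T*S:ℝ)/D) := ⟨_, rfl⟩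
  have hM' : (T:ℝ)^T * (Fintype.card (I → Fin L) * P * (Cx*L)^T *
      Real.exp (Cx*L*(Fintype.card I*S+R))) * (2*S/R)^((T*S:ℝ)/Fintype.card I) = M := by
    rw [hM, hI]
    simp only [Fintype.card_pi, Fintype.card_fin, Finset.prod_const, Finset.card_univ, hI]
    push_cast
    rfl
  rw [hM'] at han
  rw [← hM] at hlt
  have hR0 : 0 ≤ R := le_trans (by positivity) hR
  have hM0 : 0 ≤ M := by rw [hM]; positivity
  have hch := bk_change (fun (m : I → Fin L) k => X (fun k => m k) k)
    (fun (m : I → Fin L) j => φ (u (fun k => m k) j)) d (fun m j => hd _ j) Cd hCd (by linarith) M hM0 T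
    (fun m => φ (ξ m : K) * Complex.exp (∑ k, X (fun k => m k) k * s0 k))
    (fun l hl => han l hl s0 hs0) v0 hv0
  have hsmall : ‖φ (G v0 s0)‖ ≤ C2 ^ (L * S) * (Cd ^ T * M) := by
    rw [hφG v0 s0 hs0, norm_mul, Complex.norm_real, Real.norm_of_nonneg hΔ0.le]
    exact mul_le_mul hΔ hch (norm_nonneg _) (by positivity)
  have hGint : IsIntegral ℤ (G v0 s0) := by
    rw [hG]
    apply IsIntegral.sum
    intro m _
    exact ((ξ m).2.mul (hB _ s0 (hmL m) hs0).1).mul (bk_listint _ _ (hu _))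
  have hGh : house (G v0 s0) ≤ (L:ℝ)^D * P * (Om*L)^T * C2^(L*S) := by
    rw [bk_house_le_iff]
    intro ψ
    rw [hG, map_sum]
    refine (norm_sum_le _ _).trans ?_
    have : ∀ m ∈ (univ : Finset (I → Fin L)), ‖ψ ((ξ m : K) * B (fun k => m k) s0 *
        (v0.map (u (fun k => m k))).prod)‖ ≤ P * C2 ^ (L * S) * (Om * L) ^ T := by
      intro m _
      rw [map_mul, map_mul, norm_mul, norm_mul, map_list_prod, List.map_map]
      apply mul_le_mul _ _ (norm_nonneg _) (by positivity)
      · exact mul_le_mul ((norm_embedding_le_house _ _).trans (hξh' m))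
          ((norm_embedding_le_house _ _).trans (hB _ s0 (hmL m) hs0).2.1) (norm_nonneg _) hP0
      · rw [← hv0]
        exact bk_listnorm _ _ _ fun j => (norm_embedding_le_house _ _).trans (huh L _ (hmL m) j)
    refine (Finset.sum_le_card_nsmul _ _ _ this).trans (le_of_eq ?_)
    simp only [Fintype.card_pi, Fintype.card_fin, Finset.prod_const, Finset.card_univ, hI, nsmul_eq_mul]
    push_cast
    ring
  have := bk_normge φ _ hGint hG0 _ _ hsmall hGh
  rw [← hD] at this
  linarith

end partA5

section partA6
open Filter Topology Finset NumberField

theorem bk_house_aut {K : Type*} [Field K] [NumberField K] (σ : K ≃ₐ[ℚ] K) (x : K) :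
    house (σ x) ≤ house x := by
  rw [bk_house_le_iff]
  intro ψ
  exact norm_embedding_le_house x (ψ.comp (σ : K →+* K))

theorem bk_trace_int {K : Type*} [Field K] [NumberField K] [IsGalois ℚ K] (x : K)
    (hx : IsIntegral ℤ x) : ∃ n : ℤ, (n : K) = ∑ σ : K ≃ₐ[ℚ] K, σ x := by
  have h1 : IsIntegral ℤ (Algebra.trace ℚ K x) := Algebra.isIntegral_trace hx
  obtain ⟨n, hn⟩ := IsIntegrallyClosed.isIntegral_iff.1 h1
  refine ⟨n, ?_⟩
  rw [← trace_eq_sum_automorphisms, ← hn]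
  simp

theorem bk_main (K : Type) [Field K] [NumberField K] [IsGalois ℚ K] (φ : K →+* ℂ)
    {ι : Type} [Fintype ι] (lam : ι → ℂ) (al be : ι → K) (hal : ∀ i, Complex.exp (lam i) = φ (al i))
    (hbe : ∀ i, IsIntegral ℤ (be i)) (τ0 : K ≃ₐ[ℚ] K) (h0 : ∑ i, φ (τ0 (be i)) * lam i = 0)
    (σ0 : K ≃ₐ[ℚ] K) : ∑ i, φ (σ0 (be i)) * lam i = 0 := by
  classical
  obtain ⟨Θ, hΘ⟩ : ∃ Θ : (K ≃ₐ[ℚ] K) → ℂ, ∀ σ, Θ σ = ∑ i, φ (σ (be i)) * lam i := ⟨_, fun _ => rfl⟩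
  rw [← hΘ] at h0 ⊢
  by_contra hσ0
  obtain ⟨w, hw⟩ : ∃ w : Module.Free.ChooseBasisIndex ℤ (𝓞 K) → K, ∀ k, w k = integralBasis K k :=
    ⟨_, fun _ => rfl⟩
  have hwint : ∀ k, IsIntegral ℤ (w k) := by
    intro k
    rw [hw, integralBasis_apply]
    exact RingOfIntegers.isIntegral_coe _
  obtain ⟨κ, hκ⟩ : ∃ κ : (Module.Free.ChooseBasisIndex ℤ (𝓞 K) → ℕ) → K,
      ∀ m, κ m = ∑ k, (m k : K) * w k := ⟨_, fun _ => rfl⟩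
  have hκint : ∀ m, IsIntegral ℤ (κ m) := by
    intro m
    rw [hκ]
    apply IsIntegral.sum
    intro k _
    exact IsIntegral.mul (by simpa using (isIntegral_algebraMap (R := ℤ) (A := K) (x := (m k : ℤ)))) (hwint k)
  have hκinj : Function.Injective κ := by
    intro m m' h
    have e : ∀ m, κ m = ∑ k, (m k : ℚ) • integralBasis K k := by
      intro m
      rw [hκ]
      apply Finset.sum_congr rfl
      intro k _
      rw [Algebra.smul_def, hw]
      simp
    rw [e, e] at h
    have h2 := congrArg (fun x => ⇑((integralBasis K).repr x)) h
    beta_reduce at h2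
    rw [Module.Basis.repr_sum_self, Module.Basis.repr_sum_self] at h2
    funext k
    have := congrFun h2 k
    exact_mod_cast this
  obtain ⟨d', hd'⟩ := bk_dual K φ
  have hd'2 : ∀ σ τ : K ≃ₐ[ℚ] K, ∑ k, d' σ k * φ (τ (w k)) = if σ = τ then 1 else 0 := by
    intro σ τ
    simp only [hw]
    rw [hd' σ τ]
  clear hd'
  obtain ⟨Om, hOm⟩ : ∃ Om : ℝ, Om = 1 + ∑ k, house (w k) := ⟨_, rfl⟩
  have hsumw : 0 ≤ ∑ k, house (w k) := Finset.sum_nonneg fun k _ => house_nonneg _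
  have hOm1 : 1 ≤ Om := by linarith
  have hwOm : ∀ k, house (w k) ≤ Om := by
    intro k
    have := Finset.single_le_sum (f := fun k => house (w k)) (fun k _ => house_nonneg _) (mem_univ k)
    rw [hOm]; linarith
  have hκh : ∀ (L : ℕ) m, (∀ k, m k < L) → house (κ m) ≤ Om * L := by
    intro L m hm
    rw [hκ]
    refine (house_sum_le_sum_house _ _).trans ?_
    calc _ ≤ ∑ k, house (w k) * L := by
          apply Finset.sum_le_sum
          intro k _
          rw [house_nat_mul, mul_comm]
          apply mul_le_mul_of_nonneg_left _ (house_nonneg _)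
          exact_mod_cast (hm k).le
      _ = (∑ k, house (w k)) * L := by rw [Finset.sum_mul]
      _ ≤ _ := by
          apply mul_le_mul_of_nonneg_right _ (Nat.cast_nonneg _)
          linarith
  have hφh : ∀ (σ : K ≃ₐ[ℚ] K) x, ‖φ (σ x)‖ ≤ house x := fun σ x =>
    (norm_embedding_le_house _ _).trans (bk_house_aut σ x)
  obtain ⟨X, hX⟩ : ∃ X : (Module.Free.ChooseBasisIndex ℤ (𝓞 K) → ℕ) →
      Module.Free.ChooseBasisIndex ℤ (𝓞 K) → ℂ,
      ∀ m k, X m k = ∑ σ : K ≃ₐ[ℚ] K, φ (σ (κ m)) * φ (σ (w k)) * Θ σ := ⟨_, fun _ _ => rfl⟩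
  obtain ⟨Cx, hCx⟩ : ∃ Cx : ℝ, Cx = 1 + Om * Om * ∑ σ, ‖Θ σ‖ := ⟨_, rfl⟩
  have hsumT : 0 ≤ ∑ σ, ‖Θ σ‖ := Finset.sum_nonneg fun k _ => norm_nonneg _
  have hCx1 : 1 ≤ Cx := by rw [hCx]; linarith [mul_nonneg (mul_nonneg (by linarith : 0 ≤ Om) (by linarith : 0 ≤ Om)) hsumT]
  have hXb : ∀ (L : ℕ) m, (∀ k, m k < L) → ∀ k, ‖X m k‖ ≤ Cx * L := by
    intro L m hm k
    rw [hX]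
    refine (norm_sum_le _ _).trans ?_
    calc _ ≤ ∑ σ, (Om * L) * Om * ‖Θ σ‖ := by
          apply Finset.sum_le_sum
          intro σ _
          rw [norm_mul, norm_mul]
          apply mul_le_mul_of_nonneg_right _ (norm_nonneg _)
          exact mul_le_mul ((hφh σ _).trans (hκh L m hm)) ((hφh σ _).trans (hwOm k)) (norm_nonneg _)
            (by positivity)
      _ = (Om * Om * ∑ σ, ‖Θ σ‖) * L := by rw [← Finset.mul_sum]; ring
      _ ≤ _ := by
          apply mul_le_mul_of_nonneg_right _ (Nat.cast_nonneg _)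
          linarith
  obtain ⟨δ, W, hδ1, hδW, hδ⟩ := bk_zpow al
  have hW1 : 1 ≤ W := le_trans (by exact_mod_cast hδ1) hδW
  obtain ⟨Hb, hHb⟩ : ∃ Hb : ℝ, Hb = ∑ i, house (be i) := ⟨_, rfl⟩
  have hbeH : ∀ i, house (be i) ≤ Hb := by
    intro i
    rw [hHb]
    exact Finset.single_le_sum (f := fun k => house (be k)) (fun k _ => house_nonneg _) (mem_univ i)
  obtain ⟨C0, hC0⟩ : ∃ C0 : ℕ, Fintype.card (K ≃ₐ[ℚ] K) * (Om * Om * Hb) ≤ C0 := exists_nat_ge _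
  choose tr htr using fun i m s => bk_trace_int (κ m * κ s * be i)
    (((hκint m).mul (hκint s)).mul (hbe i))
  have htrφ : ∀ i m s, ((tr i m s : ℤ) : ℂ) =
      ∑ σ : K ≃ₐ[ℚ] K, φ (σ (κ m)) * φ (σ (κ s)) * φ (σ (be i)) := by
    intro i m s
    have := congrArg φ (htr i m s)
    rw [map_intCast, map_sum] at this
    rw [this]
    simp only [map_mul]
  have htrb : ∀ i m s (L S : ℕ), (∀ k, m k < L) → (∀ k, s k < S) →
      |tr i m s| ≤ ((C0 * (L * S) : ℕ) : ℤ) := by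
    intro i m s L S hm hs
    have h1 : ‖((tr i m s : ℤ) : ℂ)‖ ≤ C0 * (L * S) := by
      rw [htrφ]
      refine (norm_sum_le _ _).trans ?_
      have : ∀ σ ∈ (univ : Finset (K ≃ₐ[ℚ] K)), ‖φ (σ (κ m)) * φ (σ (κ s)) * φ (σ (be i))‖ ≤
          (Om * L) * (Om * S) * Hb := by
        intro σ _
        rw [norm_mul, norm_mul]
        apply mul_le_mul _ ((hφh σ _).trans (hbeH i)) (norm_nonneg _) (by positivity)
        exact mul_le_mul ((hφh σ _).trans (hκh L m hm)) ((hφh σ _).trans (hκh S s hs)) (norm_nonneg _)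
            (by positivity)
      refine (Finset.sum_le_card_nsmul _ _ _ this).trans ?_
      rw [nsmul_eq_mul, Finset.card_univ]
      calc _ = Fintype.card (K ≃ₐ[ℚ] K) * (Om * Om * Hb) * (L * S) := by ring
        _ ≤ _ := mul_le_mul_of_nonneg_right hC0 (by positivity)
    rw [Complex.norm_intCast] at h1
    exact_mod_cast h1
  have hC2 : 1 ≤ W ^ (C0 * Fintype.card ι) := one_le_pow₀ hW1
  refine bk_core K φ (I := Module.Free.ChooseBasisIndex ℤ (𝓞 K)) (J := {σ : K ≃ₐ[ℚ] K // Θ σ ≠ 0})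
    ?_ ?_ Om (W ^ (C0 * Fintype.card ι))
    (1 + ∑ j : {σ : K ≃ₐ[ℚ] K // Θ σ ≠ 0}, ∑ k, ‖d' j.1 k / Θ j.1‖) Cx hOm1 hC2 ?_ hCx1
    (fun m j => j.1 (κ m)) ?_ (fun L m hm j => (bk_house_aut _ _).trans (hκh L m hm)) X hXb
    (fun j k => d' j.1 k / Θ j.1) (fun k j => φ (j.1 (w k)) * Θ j.1) ?_ ?_ ?_ ⟨σ0, hσ0⟩ ?_ ?_
  · rw [← Module.finrank_eq_card_chooseBasisIndex, RingOfIntegers.rank]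
  · have h1 : Fintype.card {σ : K ≃ₐ[ℚ] K // Θ σ ≠ 0} < Fintype.card (K ≃ₐ[ℚ] K) :=
      Fintype.card_subtype_lt (x := τ0) (by simpa using h0)
    rw [← IsGalois.card_aut_eq_finrank ℚ K, Nat.card_eq_fintype_card]
    exact h1
  · linarith [Finset.sum_nonneg (s := univ) (f := fun j : {σ : K ≃ₐ[ℚ] K // Θ σ ≠ 0} => ∑ k, ‖d' j.1 k / Θ j.1‖) (fun j _ =>
      Finset.sum_nonneg fun k _ => norm_nonneg _)]
  · intro m j
    exact (hκint m).map (j.1 : K →+* K).toIntAlgHom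
  · intro m j
    simp only [hX, Finset.mul_sum]
    rw [Finset.sum_comm]
    have : ∀ σ : K ≃ₐ[ℚ] K, ∑ k, d' j.1 k / Θ j.1 * (φ (σ (κ m)) * φ (σ (w k)) * Θ σ) =
        φ (σ (κ m)) * Θ σ / Θ j.1 * (if j.1 = σ then 1 else 0) := by
      intro σ
      rw [← hd'2, Finset.mul_sum]
      apply Finset.sum_congr rfl
      intro k _
      ring
    simp only [this]
    rw [Finset.sum_eq_single j.1]
    · rw [if_pos rfl, mul_one, mul_div_cancel_right₀ _ j.2]
    · intro σ _ hσ
      rw [if_neg (Ne.symm hσ), mul_zero]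
    · simp
  · intro m k
    rw [hX]
    have h1 : ∑ j : {σ : K ≃ₐ[ℚ] K // Θ σ ≠ 0}, φ (j.1 (w k)) * Θ j.1 * φ (j.1 (κ m)) =
      ∑ σ ∈ univ.filter (fun σ => Θ σ ≠ 0), φ (σ (w k)) * Θ σ * φ (σ (κ m)) := by
      rw [Finset.sum_subtype (p := fun σ => Θ σ ≠ 0)]
      simp
    rw [h1, Finset.sum_filter_of_ne]
    · apply Finset.sum_congr rfl
      intro σ _
      ring
    · intro σ _ h h2
      rw [h2] at h
      simp at h
  · intro j
    have := Finset.single_le_sum (s := univ) (f := fun j : {σ : K ≃ₐ[ℚ] K // Θ σ ≠ 0} => ∑ k, ‖d' j.1 k / Θ j.1‖)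
      (fun j _ => Finset.sum_nonneg fun k _ => norm_nonneg _) (mem_univ j)
    exact le_trans this (by linarith)
  · intro m m' h
    exact hκinj (σ0.injective h)
  · intro L S hL hS
    obtain ⟨E, hE⟩ : ∃ E, E = C0 * (L * S) := ⟨_, rfl⟩
    have hEE : (W ^ (C0 * Fintype.card ι)) ^ (L * S) = ∏ i : ι, W ^ E := by
      rw [Finset.prod_const, ← pow_mul, ← pow_mul, hE, Finset.card_univ]
      congr 1
      ring
    refine ⟨fun m s => ∏ i, ((δ : K) ^ E * al i ^ tr i m s), ∏ i : ι, (δ : ℝ) ^ E, ?_, ?_, ?_⟩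
    · have : (0 : ℝ) < δ := by exact_mod_cast hδ1
      positivity
    · rw [hEE]
      apply Finset.prod_le_prod
      · intro i _; positivity
      · intro i _; gcongr
    intro m s hm hs
    have hz := fun i => hδ i (tr i m s) E (by rw [hE]; exact htrb i m s L S hm hs)
    refine ⟨?_, ?_, ?_⟩
    · exact IsIntegral.prod _ fun i _ => (hz i).1
    · rw [bk_house_le_iff]
      intro ψ
      rw [hEE, map_prod, norm_prod]
      apply Finset.prod_le_prod
      · intro i _; exact norm_nonneg _
      · intro i _; exact (norm_embedding_le_house _ _).trans (hz i).2
    · rw [map_prod]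
      simp only [map_mul, map_pow, map_natCast, map_zpow₀, ← hal, Finset.prod_mul_distrib]
      push_cast
      congr 1
      simp only [← Complex.exp_int_mul, ← Complex.exp_sum]
      congr 1
      simp only [htrφ, hX, Finset.sum_mul]
      rw [Finset.sum_comm]
      rw [Finset.sum_comm (s := univ (α := Module.Free.ChooseBasisIndex ℤ (𝓞 K)))]
      apply Finset.sum_congr rfl
      intro σ _
      have e1 : φ (σ (κ s)) = ∑ k, (s k : ℂ) * φ (σ (w k)) := by
        rw [hκ, map_sum, map_sum]
        apply Finset.sum_congr rfl
        intro k _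
        rw [map_mul, map_mul, map_natCast, map_natCast]
      calc _ = φ (σ (κ m)) * φ (σ (κ s)) * Θ σ := by
            rw [hΘ, Finset.mul_sum]
            exact Finset.sum_congr rfl fun i _ => by ring
        _ = _ := by
            rw [e1, Finset.mul_sum, Finset.sum_mul]
            exact Finset.sum_congr rfl fun i _ => by ring

end partA6

section partB1
open Filter Topology Finset

theorem pb_parts (g w : ℕ → ℂ) (N : ℕ) : ∑ i ∈ range N, g i * w i =
    (∑ i ∈ range N, g i) * w N + ∑ i ∈ range N, (∑ j ∈ range (i + 1), g j) * (w i - w (i + 1)) := by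
  induction N with
  | zero => simp
  | succ N ih =>
    rw [Finset.sum_range_succ, ih, Finset.sum_range_succ (fun i => (∑ j ∈ range (i + 1), g j) * _),
      Finset.sum_range_succ g]
    ring

theorem pb_abel (g : ℕ → ℂ) (h : Tendsto (fun N => ∑ i ∈ range N, g i) atTop (𝓝 0))
    (hs : ∀ σ : ℝ, 0 < σ → Summable (fun n : ℕ => g n * ((((n : ℝ) + 1) ^ (-σ) : ℝ) : ℂ))) :
    Tendsto (fun σ : ℝ => ∑' n : ℕ, g n * ((((n : ℝ) + 1) ^ (-σ) : ℝ) : ℂ)) (𝓝[>] 0) (𝓝 0) := by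
  obtain ⟨C, hC⟩ : ∃ C, ∀ N, ‖∑ i ∈ range N, g i‖ ≤ C := by
    obtain ⟨C, hC⟩ := (Metric.isBounded_range_of_tendsto _ h).exists_norm_le
    exact ⟨C, fun N => hC _ ⟨N, rfl⟩⟩
  have hC0 : 0 ≤ C := (norm_nonneg _).trans (hC 0)
  rw [Metric.tendsto_nhds]
  intro ε hε
  obtain ⟨N0, hN0⟩ := (Metric.tendsto_atTop.1 h) (ε / 3) (by positivity)
  have hlim : Tendsto (fun σ : ℝ => C * (1 - ((N0 : ℝ) + 1) ^ (-σ))) (𝓝[>] 0) (𝓝 0) := by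
    have h1 : Continuous (fun σ : ℝ => C * (1 - ((N0 : ℝ) + 1) ^ (-σ))) := by
      apply Continuous.mul continuous_const
      apply Continuous.sub continuous_const
      exact Continuous.rpow continuous_const continuous_neg (fun x => Or.inl (by positivity))
    have h2 := h1.tendsto 0
    simp at h2
    exact h2.mono_left nhdsWithin_le_nhds
  have hev := (Metric.tendsto_nhds.1 hlim) (ε / 3) (by positivity)
  filter_upwards [hev, self_mem_nhdsWithin] with σ hσ hσ0
  have hσ0 : 0 < σ := hσ0
  obtain ⟨w, hw⟩ : ∃ w : ℕ → ℝ, ∀ n : ℕ, w n = ((n : ℝ) + 1) ^ (-σ) := ⟨_, fun _ => rfl⟩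
  have hanti : ∀ n, w (n + 1) ≤ w n := by
    intro n
    rw [hw, hw]
    apply Real.rpow_le_rpow_of_nonpos (by positivity) (by push_cast; linarith) (by linarith)
  have hw0 : ∀ n, 0 ≤ w n := fun n => by rw [hw]; positivity
  have hw1 : w 0 = 1 := by rw [hw]; simp
  have hwlim : Tendsto w atTop (𝓝 0) := by
    have h1 : Tendsto (fun n : ℕ => (n : ℝ) + 1) atTop atTop :=
      tendsto_atTop_add_const_right _ _ tendsto_natCast_atTop_atTop
    have := (tendsto_rpow_neg_atTop hσ0).comp h1
    exact this.congr fun n => (hw n).symm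
  have key : ∀ N, ‖∑ i ∈ range N, (∑ j ∈ range (i + 1), g j) * ((w i : ℂ) - w (i + 1))‖ ≤
      ε / 3 * (1 - w N) + C * (1 - w (min N N0)) := by
    intro N
    induction N with
    | zero => simp [hw1]
    | succ N ih =>
      rw [Finset.sum_range_succ]
      refine (norm_add_le _ _).trans ?_
      rw [norm_mul]
      have e : ‖(w N : ℂ) - w (N + 1)‖ = w N - w (N + 1) := by
        rw [← Complex.ofReal_sub, Complex.norm_real, Real.norm_of_nonneg (by linarith [hanti N])]
      rw [e]
      have hd := hanti N
      rcases lt_or_ge N N0 with hlt | hge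
      · rw [min_eq_left (by omega)] at ih ⊢
        have h3 := mul_le_mul_of_nonneg_right (hC (N + 1)) (by linarith : 0 ≤ w N - w (N + 1))
        have h4 : 0 ≤ ε / 3 * (w N - w (N + 1)) := mul_nonneg (by positivity) (by linarith)
        linarith
      · rw [min_eq_right (by omega)] at ih ⊢
        have h5 := hN0 (N + 1) (by omega)
        rw [dist_zero_right] at h5
        have h3 := mul_le_mul_of_nonneg_right h5.le (by linarith : 0 ≤ w N - w (N + 1))
        linarith
  have hsum := (hs σ hσ0).hasSum.tendsto_sum_nat
  have hle : ‖∑' n : ℕ, g n * ((((n : ℝ) + 1) ^ (-σ) : ℝ) : ℂ)‖ ≤ ε / 3 + C * (1 - w N0) := by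
    have hl : Tendsto (fun N => C * w N + (ε / 3 + C * (1 - w N0))) atTop
        (𝓝 (C * 0 + (ε / 3 + C * (1 - w N0)))) := (hwlim.const_mul C).add_const _
    rw [mul_zero, zero_add] at hl
    refine le_of_tendsto_of_tendsto hsum.norm hl ?_
    filter_upwards [eventually_ge_atTop N0] with N hN
    simp only [← hw]
    rw [pb_parts g (fun n => (w n : ℂ))]
    refine (norm_add_le _ _).trans ?_
    have h1 := key N
    rw [min_eq_right hN] at h1
    have h2 : ε / 3 * (1 - w N) ≤ ε / 3 := by
      have := mul_nonneg (by positivity : 0 ≤ ε / 3) (hw0 N)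
      linarith
    have h3 : ‖(∑ i ∈ range N, g i) * (w N : ℂ)‖ ≤ C * w N := by
      rw [norm_mul, Complex.norm_real, Real.norm_of_nonneg (hw0 N)]
      exact mul_le_mul_of_nonneg_right (hC N) (hw0 N)
    linarith
  rw [dist_zero_right] at hσ ⊢
  rw [Real.norm_eq_abs, ← hw] at hσ
  have := le_abs_self (C * (1 - w N0))
  linarith

theorem pb_log (z : ℂ) (hz : ‖z‖ = 1) (hz1 : z ≠ 1) :
    Tendsto (fun N => ∑ i ∈ range N, z ^ i / (i : ℂ)) atTop (𝓝 (-Complex.log (1 - z))) := by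
  have hre : 0 < (1 - z).re := by
    rw [Complex.sub_re, Complex.one_re]
    have h1 : z.re ≤ ‖z‖ := Complex.re_le_norm z
    rcases h1.lt_or_eq with h | h
    · linarith
    · exfalso
      apply hz1
      have h2 := Complex.sq_norm z
      rw [Complex.normSq_apply, hz] at h2
      have h3 : z.im = 0 := by
        have : z.im * z.im = 0 := by rw [h, hz] at h2; linarith
        exact mul_self_eq_zero.1 this
      apply Complex.ext
      · simp [h, hz]
      · simp [h3]
  obtain ⟨l, hl⟩ : ∃ l, Tendsto (fun N => ∑ i ∈ range N, z ^ i / (i : ℂ)) atTop (𝓝 l) := by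
    have hc : CauchySeq (fun n => ∑ i ∈ range n, (1 / ((i : ℝ) + 1)) • z ^ (i + 1)) := by
      apply Antitone.cauchySeq_series_mul_of_tendsto_zero_of_bounded (b := 2 / ‖z - 1‖)
      · intro a b hab
        apply one_div_le_one_div_of_le (by positivity)
        have : (a : ℝ) ≤ b := by exact_mod_cast hab
        linarith
      · exact tendsto_one_div_add_atTop_nhds_zero_nat
      · intro n
        simp only [pow_succ]
        rw [← Finset.sum_mul, geom_sum_eq hz1, norm_mul, hz, mul_one, norm_div]
        gcongr
        refine (norm_sub_le _ _).trans ?_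
        rw [norm_pow, hz]; norm_num
    obtain ⟨l, hl⟩ := cauchySeq_tendsto_of_complete hc
    refine ⟨l, ?_⟩
    rw [← tendsto_add_atTop_iff_nat 1]
    refine hl.congr fun n => ?_
    rw [Finset.sum_range_succ']
    simp only [Nat.cast_zero, div_zero, add_zero]
    apply Finset.sum_congr rfl
    intro i _
    rw [Complex.real_smul]
    push_cast
    ring
  have h1 := Complex.tendsto_tsum_powerSeries_nhdsWithin_lt hl
  rw [tendsto_map'_iff] at h1
  have h2 : Tendsto (fun x : ℝ => -Complex.log (1 - z * x)) (𝓝[<] 1) (𝓝 (-Complex.log (1 - z))) := by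
    have : ContinuousAt (fun x : ℝ => -Complex.log (1 - z * x)) 1 := by
      apply ContinuousAt.neg
      apply ContinuousAt.clog
      · fun_prop
      · left; simpa using hre
    have := this.tendsto
    simp only [Complex.ofReal_one, mul_one] at this
    exact this.mono_left nhdsWithin_le_nhds
  have h3 : Tendsto (fun x : ℝ => -Complex.log (1 - z * x)) (𝓝[<] 1) (𝓝 l) := by
    refine h1.congr' ?_
    have : ∀ᶠ x : ℝ in 𝓝[<] 1, x ∈ Set.Ioo (-1 : ℝ) 1 := by
      apply Ioo_mem_nhdsLT; norm_num
    filter_upwards [this] with x hx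
    have hn : ‖z * (x : ℂ)‖ < 1 := by
      rw [norm_mul, hz, one_mul, Complex.norm_real, Real.norm_eq_abs, abs_lt]
      exact hx
    rw [← (Complex.hasSum_taylorSeries_neg_log hn).tsum_eq]
    apply tsum_congr
    intro n
    rw [mul_pow]
    ring
  rwa [tendsto_nhds_unique h3 h2] at hl

end partB1

section partB2
open Filter Topology Finset

theorem pb_lim (q : ℕ) [NeZero q] (e : AddChar (ZMod q) ℂ) (he : e.IsPrimitive)
    (G c : ZMod q → ℂ) (hc : ∀ a, c a = ∑ b, G b * e (-(a * b))) :
    Tendsto (fun N => (q : ℂ) * ∑ i ∈ range N, G (i : ℕ) / (i : ℂ) - c 0 * ∑ i ∈ range N, 1 / (i : ℂ))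
      atTop (𝓝 (-∑ a, c a * Complex.log (1 - e a))) := by
  have hpow : ∀ (a : ZMod q) (i : ℕ), e (a * (i : ZMod q)) = e a ^ i := by
    intro a i
    rw [← AddChar.map_nsmul_eq_pow, nsmul_eq_mul, mul_comm]
  have hinv : ∀ n : ZMod q, (q : ℂ) * G n = ∑ a, c a * e (a * n) := by
    intro n
    simp only [hc, Finset.sum_mul]
    rw [Finset.sum_comm]
    have : ∀ b, ∑ a, G b * e (-(a * b)) * e (a * n) = G b * if n - b = 0 then (q : ℂ) else 0 := by
      intro b
      have h1 := AddChar.sum_mulShift (n - b) he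
      rw [ZMod.card] at h1
      push_cast at h1
      rw [← h1, Finset.mul_sum]
      apply Finset.sum_congr rfl
      intro a _
      rw [mul_assoc, ← AddChar.map_add_eq_mul]
      congr 2
      ring
    simp only [this]
    rw [Finset.sum_eq_single n]
    · simp [mul_comm]
    · intro b _ hb
      rw [if_neg (sub_ne_zero.2 (Ne.symm hb)), mul_zero]
    · simp
  have hsplit : ∀ N, (q : ℂ) * ∑ i ∈ range N, G (i : ℕ) / (i : ℂ) - c 0 * ∑ i ∈ range N, 1 / (i : ℂ)
      = ∑ a ∈ univ.erase 0, c a * ∑ i ∈ range N, e a ^ i / (i : ℂ) := by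
    intro N
    rw [sub_eq_iff_eq_add]
    have h0 : c 0 * ∑ i ∈ range N, 1 / (i : ℂ) = c 0 * ∑ i ∈ range N, e 0 ^ i / (i : ℂ) := by
      simp
    rw [h0, Finset.sum_erase_add univ (fun a => c a * ∑ i ∈ range N, e a ^ i / (i : ℂ)) (mem_univ 0)]
    simp only [Finset.mul_sum]
    rw [Finset.sum_comm]
    apply Finset.sum_congr rfl
    intro i _
    rw [mul_div_assoc', hinv, Finset.sum_div]
    apply Finset.sum_congr rfl
    intro a _
    rw [hpow]
    ring
  have hlim : (-∑ a, c a * Complex.log (1 - e a)) =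
      ∑ a ∈ univ.erase 0, c a * (-Complex.log (1 - e a)) := by
    rw [← Finset.sum_erase_add univ _ (mem_univ 0)]
    simp [Finset.sum_neg_distrib]
  rw [hlim]
  simp only [hsplit]
  apply tendsto_finset_sum
  intro a ha
  apply Tendsto.const_mul
  apply pb_log
  · exact AddChar.norm_apply e a
  · intro h
    have ha : a ≠ 0 := by simpa using ha
    apply he ha
    ext x
    simp only [AddChar.mulShift_apply, AddChar.one_apply]
    have := hpow a x.val
    rw [h, one_pow, ZMod.natCast_zmod_val] at this
    exact this

theorem pb_harm (c l : ℂ) (h : Tendsto (fun N => c * ∑ i ∈ range N, 1 / (i : ℂ)) atTop (𝓝 l)) :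
    c = 0 := by
  by_contra hc
  have h1 : Tendsto (fun N => ∑ i ∈ range N, 1 / (i : ℂ)) atTop (𝓝 (c⁻¹ * l)) := by
    refine (h.const_mul c⁻¹).congr fun N => ?_
    rw [← mul_assoc, inv_mul_cancel₀ hc, one_mul]
  have h2 : Tendsto (fun N => ∑ i ∈ range (N + 1), 1 / (i : ℂ)) atTop (𝓝 (c⁻¹ * l)) :=
    h1.comp (tendsto_add_atTop_nat 1)
  have h3 := (Complex.continuous_re.tendsto _).comp h2
  refine not_tendsto_nhds_of_tendsto_atTop Real.tendsto_sum_range_one_div_nat_succ_atTop _ (h3.congr fun N => ?_)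
  simp only [Function.comp]
  rw [Finset.sum_range_succ', Complex.add_re, Complex.re_sum]
  simp only [Nat.cast_zero, div_zero, Complex.zero_re, add_zero]
  apply Finset.sum_congr rfl
  intro i _
  have : (1 / ((i + 1 : ℕ) : ℂ)) = ((1 / ((i : ℝ) + 1) : ℝ) : ℂ) := by push_cast; rfl
  rw [this, Complex.ofReal_re]

theorem pb_conj (q : ℕ) [NeZero q] (F : ZMod q → ℤ)
    (hF : Tendsto (fun N => ∑ i ∈ range N, (F (i : ℕ) : ℂ) / (i : ℂ)) atTop (𝓝 0)) (h : (ZMod q)ˣ) :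
    Tendsto (fun N => ∑ i ∈ range N, (F (h * (i : ℕ)) : ℂ) / (i : ℂ)) atTop (𝓝 0) := by
  classical
  have hneq : NeZero ((q : ℕ) : ℚ) := ⟨by exact_mod_cast NeZero.ne q⟩
  have hcyc : IsCyclotomicExtension {q} ℚ (CyclotomicField q ℚ) :=
    CyclotomicField.isCyclotomicExtension q ℚ
  have hζK := IsCyclotomicExtension.zeta_spec q ℚ (CyclotomicField q ℚ)
  obtain ⟨z, hz⟩ : ∃ z : CyclotomicField q ℚ, z = IsCyclotomicExtension.zeta q ℚ (CyclotomicField q ℚ) :=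
    ⟨IsCyclotomicExtension.zeta q ℚ (CyclotomicField q ℚ), rfl⟩
  have φ : CyclotomicField q ℚ →+* ℂ := Classical.arbitrary _
  have : IsGalois ℚ (CyclotomicField q ℚ) := IsCyclotomicExtension.isGalois {q} ℚ _
  have irr : Irreducible (Polynomial.cyclotomic q ℚ) :=
    Polynomial.cyclotomic.irreducible_rat (NeZero.pos q)
  have hζ : IsPrimitiveRoot (φ z) q := by rw [hz]; exact hζK.map_of_injective φ.injective
  obtain ⟨e, he⟩ : ∃ e, e = AddChar.zmodChar q hζ.pow_eq_one := ⟨_, rfl⟩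
  have hprim : e.IsPrimitive := by
    rw [he]; exact AddChar.zmodChar_primitive_of_primitive_root q hζ
  have hee : ∀ a, e a = φ z ^ a.val := fun a => by rw [he, AddChar.zmodChar_apply]
  have hpow : ∀ (a : ZMod q) (i : ℕ), e (a * (i : ZMod q)) = e a ^ i := by
    intro a i
    rw [← AddChar.map_nsmul_eq_pow, nsmul_eq_mul, mul_comm]
  -- automorphisms
  have hσ : ∀ g : (ZMod q)ˣ, ∃ σ : CyclotomicField q ℚ ≃ₐ[ℚ] CyclotomicField q ℚ,
      σ z = z ^ (g : ZMod q).val := by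
    intro g
    refine ⟨(IsCyclotomicExtension.autEquivPow (CyclotomicField q ℚ) irr).symm g, ?_⟩
    have h1 := hζK.autToPow_spec ℚ ((IsCyclotomicExtension.autEquivPow (CyclotomicField q ℚ) irr).symm g)
    rw [hz, ← h1]
    congr 3
    exact (IsCyclotomicExtension.autEquivPow (CyclotomicField q ℚ) irr).apply_symm_apply g
  obtain ⟨be, hbe⟩ : ∃ be : ZMod q → CyclotomicField q ℚ,
      ∀ a, be a = ∑ b, (F b : CyclotomicField q ℚ) * z ^ (-(a * b)).val := ⟨_, fun _ => rfl⟩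
  have hbeint : ∀ a, IsIntegral ℤ (be a) := by
    intro a
    rw [hbe]
    apply IsIntegral.sum
    intro b _
    apply IsIntegral.mul
    · simpa using (isIntegral_algebraMap (R := ℤ) (A := CyclotomicField q ℚ) (x := F b))
    · apply IsIntegral.pow
      rw [hz]
      exact hζK.isIntegral (NeZero.pos q)
  have hbeφ : ∀ (g : (ZMod q)ˣ) (σ : CyclotomicField q ℚ ≃ₐ[ℚ] CyclotomicField q ℚ),
      σ z = z ^ (g : ZMod q).val → ∀ a, φ (σ (be a)) = ∑ b, (F (((g⁻¹ : (ZMod q)ˣ) : ZMod q) * b) : ℂ) * e (-(a * b)) := by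
    intro g σ hσ a
    rw [hbe, map_sum, map_sum]
    rw [← Equiv.sum_comp (Units.mulLeft g) (fun b => (F (((g⁻¹ : (ZMod q)ˣ) : ZMod q) * b) : ℂ) * e (-(a * b)))]
    apply Finset.sum_congr rfl
    intro b _
    rw [map_mul, map_mul, map_intCast, map_intCast, Units.mulLeft_apply, Units.inv_mul_cancel_left,
      map_pow, hσ, map_pow, map_pow, ← hee]
    congr 1
    rw [← hpow, ZMod.natCast_zmod_val]
    congr 1
    ring
  obtain ⟨c, hc⟩ : ∃ c : (ZMod q)ˣ → ZMod q → ℂ, ∀ g a,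
    c g a = ∑ b, (F (((g⁻¹ : (ZMod q)ˣ) : ZMod q) * b) : ℂ) * e (-(a * b)) := ⟨_, fun _ _ => rfl⟩
  have hL : ∀ g : (ZMod q)ˣ, Tendsto (fun N => (q : ℂ) * ∑ i ∈ range N, (F (((g⁻¹ : (ZMod q)ˣ) : ZMod q) * (i : ℕ)) : ℂ) / (i : ℂ)
      - c g 0 * ∑ i ∈ range N, 1 / (i : ℂ))
      atTop (𝓝 (-∑ a, c g a * Complex.log (1 - e a))) := fun g =>
    pb_lim q e hprim (fun b => (F (((g⁻¹ : (ZMod q)ˣ) : ZMod q) * b) : ℂ)) (c g) (hc g)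
  have hF1 : Tendsto (fun N => (q : ℂ) * ∑ i ∈ range N, (F (((1 : (ZMod q)ˣ)⁻¹ : (ZMod q)ˣ) * (i : ℕ)) : ℂ) / (i : ℂ))
      atTop (𝓝 0) := by
    have := hF.const_mul (q : ℂ)
    rw [mul_zero] at this
    simpa using this
  have hc10 : c 1 0 = 0 := by
    apply pb_harm _ _ ((hF1.sub (hL 1)).congr fun N => ?_)
    ring
  have hc0 : ∀ g, c g 0 = 0 := by
    intro g
    rw [← hc10, hc, hc]
    simp only [zero_mul, neg_zero, AddChar.map_zero_eq_one, mul_one, inv_one, Units.val_one, one_mul]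
    exact Equiv.sum_comp (Units.mulLeft g⁻¹) (fun b => (F b : ℂ))
  have hlog1 : ∑ a, c 1 a * Complex.log (1 - e a) = 0 := by
    have h1 := hL 1
    simp only [hc10, zero_mul, sub_zero] at h1
    have := tendsto_nhds_unique h1 hF1
    exact neg_eq_zero.1 this
  obtain ⟨σ1, hσ1⟩ := hσ 1
  obtain ⟨σh, hσh⟩ := hσ h⁻¹
  have hmain := bk_main (CyclotomicField q ℚ) φ (fun a : ZMod q => Complex.log (1 - e a))
    (fun a => if a = 0 then 1 else 1 - z ^ a.val) be (by
      intro a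
      by_cases ha : a = 0
      · simp [ha]
      · rw [if_neg ha, map_sub, map_one, map_pow, ← hee]
        apply Complex.exp_log
        intro h1
        have h2 : φ z ^ a.val = 1 := by rw [← hee]; exact (sub_eq_zero.1 h1).symm
        have h3 := (hζ.pow_eq_one_iff_dvd _).1 h2
        have h4 := Nat.eq_zero_of_dvd_of_lt h3 (ZMod.val_lt a)
        exact ha ((ZMod.val_eq_zero a).1 h4)) hbeint σ1 (by
      rw [← hlog1]
      apply Finset.sum_congr rfl
      intro a _
      rw [hbeφ 1 σ1 hσ1, hc]) σh
  have hfin := hL h⁻¹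
  have hz0 : ∑ a, c h⁻¹ a * Complex.log (1 - e a) = 0 := by
    rw [← hmain]
    apply Finset.sum_congr rfl
    intro a _
    rw [hbeφ h⁻¹ σh hσh, hc]
  simp only [hc0, zero_mul, sub_zero, hz0, neg_zero, inv_inv] at hfin
  have := hfin.const_mul (q : ℂ)⁻¹
  rw [mul_zero] at this
  refine this.congr fun N => ?_
  rw [← mul_assoc, inv_mul_cancel₀ (by exact_mod_cast NeZero.ne q), one_mul]

end partB2

section partB3
open Filter Topology Finset

theorem b3_sum (q : ℕ) (c : ZMod q → ℂ) [NeZero q] (σ : ℝ) (hσ : 0 < σ) :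
    Summable (fun n : ℕ => c n * (((n : ℝ) ^ (-(1 + σ)) : ℝ) : ℂ)) := by
  obtain ⟨C, hC⟩ : ∃ C : ℝ, ∀ a, ‖c a‖ ≤ C := ⟨∑ a, ‖c a‖, fun a =>
    Finset.single_le_sum (f := fun a => ‖c a‖) (fun _ _ => norm_nonneg _) (Finset.mem_univ a)⟩
  have h1 : Summable (fun n : ℕ => C * (n : ℝ) ^ (-(1 + σ))) :=
    (Real.summable_nat_rpow.2 (by linarith)).mul_left C
  refine Summable.of_norm_bounded h1 fun n => ?_
  rw [norm_mul, Complex.norm_real, Real.norm_of_nonneg (by positivity)]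
  exact mul_le_mul_of_nonneg_right (hC _) (by positivity)

theorem b3_Z (q : ℕ) [NeZero q] (F : ZMod q → ℤ) 
    (hF : Tendsto (fun N => ∑ i ∈ range N, (F (i : ℕ) : ℂ) / (i : ℂ)) atTop (𝓝 0)) :
    Tendsto (fun σ : ℝ => ∑' n : ℕ, (F n : ℂ) * (((n : ℝ) ^ (-(1 + σ)) : ℝ) : ℂ)) (𝓝[>] 0) (𝓝 0) := by
  have key : ∀ σ : ℝ, ∀ n : ℕ, (F ((n + 1 : ℕ) : ZMod q) : ℂ) * ((((n + 1 : ℕ) : ℝ) ^ (-(1 + σ)) : ℝ) : ℂ) =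
      (F ((n + 1 : ℕ) : ZMod q) : ℂ) / ((n + 1 : ℕ) : ℂ) * ((((n : ℝ) + 1) ^ (-σ) : ℝ) : ℂ) := by
    intro σ n
    rw [neg_add, Real.rpow_add (by positivity), Real.rpow_neg_one]
    push_cast
    ring
  have hs : ∀ σ : ℝ, 0 < σ → Summable (fun n : ℕ => (F n : ℂ) * (((n : ℝ) ^ (-(1 + σ)) : ℝ) : ℂ)) :=
    fun σ hσ => b3_sum q (fun a => (F a : ℂ)) σ hσ
  have := pb_abel (fun n => (F ((n + 1 : ℕ) : ZMod q) : ℂ) / ((n + 1 : ℕ) : ℂ)) (by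
    have h1 := (tendsto_add_atTop_iff_nat 1).2 hF
    refine h1.congr fun N => ?_
    rw [Finset.sum_range_succ']
    simp) (by
    intro σ hσ
    have := (summable_nat_add_iff 1).2 (hs σ hσ)
    exact this.congr fun n => key σ n)
  refine this.congr' ?_
  filter_upwards [self_mem_nhdsWithin] with σ hσ
  have hσ : 0 < σ := hσ
  rw [(hs σ hσ).tsum_eq_zero_add]
  simp only [key]
  rw [Nat.cast_zero, Nat.cast_zero, Real.zero_rpow (by linarith)]
  simp

theorem b3_L (q : ℕ) [NeZero q] (χ : DirichletCharacter ℂ q) (σ : ℝ) (hσ : 0 < σ) :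
    ∑' n : ℕ, χ n * (((n : ℝ) ^ (-(1 + σ)) : ℝ) : ℂ) = χ.LFunction (1 + σ) := by
  rw [DirichletCharacter.LFunction_eq_LSeries χ (by simp [hσ]), LSeries]
  apply tsum_congr
  intro n
  rw [LSeries.term_def]
  split_ifs with h
  · subst h
    rw [Nat.cast_zero, Nat.cast_zero, Real.zero_rpow (by linarith)]
    simp
  · rw [Real.rpow_neg (by positivity), div_eq_mul_inv, Complex.ofReal_inv,
      Complex.ofReal_cpow (by positivity)]
    simp

theorem b3_surj (q : ℕ) [NeZero q] (n : ℕ) : n ≠ 0 → ∃ b ∈ Nat.factoredNumbers q.primeFactors,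
    ∃ m : ℕ, m.Coprime q ∧ b * m = n := by
  induction n using induction_on_primes with
  | zero => intro h; exact absurd rfl h
  | one => intro _; exact ⟨1, by simp [Nat.mem_factoredNumbers], 1, by simp, rfl⟩
  | prime_mul p a hp ih =>
    intro h
    obtain ⟨b, hb, m, hm, hbm⟩ := ih (by rintro rfl; simp at h)
    by_cases hpq : p ∣ q
    · refine ⟨p * b, ?_, m, hm, by rw [← hbm]; ring⟩
      rw [Nat.mem_factoredNumbers_iff_forall_le] at *
      refine ⟨mul_ne_zero hp.ne_zero hb.1, fun r _ hr hrd => ?_⟩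
      rcases (Nat.Prime.dvd_mul hr).1 hrd with h | h
      · rw [(Nat.prime_dvd_prime_iff_eq hr hp).1 h]
        exact Nat.mem_primeFactors.2 ⟨hp, hpq, NeZero.ne q⟩
      · exact hb.2 r (Nat.le_of_dvd (Nat.pos_of_ne_zero hb.1) h) hr h
    · refine ⟨b, hb, p * m, ?_, by rw [← hbm]; ring⟩
      exact Nat.Coprime.mul_left ((Nat.Prime.coprime_iff_not_dvd hp).2 hpq) hm

theorem b3_cop (q : ℕ) [NeZero q] (b m : ℕ) (hb : b ∈ Nat.factoredNumbers q.primeFactors)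
    (hm : m.Coprime q) : b.Coprime m := by
  apply Nat.coprime_of_dvd
  intro p hp hpb hpm
  rw [Nat.mem_factoredNumbers_iff_forall_le] at hb
  have := hb.2 p (Nat.le_of_dvd (Nat.pos_of_ne_zero hb.1) hpb) hp hpb
  have := Nat.dvd_gcd hpm (Nat.dvd_of_mem_primeFactors this)
  rw [hm] at this
  exact hp.one_lt.ne' (Nat.dvd_one.1 this)

theorem b3_inj (q : ℕ) [NeZero q] : Function.Injective (fun x : Nat.factoredNumbers q.primeFactors × {m : ℕ | m.Coprime q} =>
    (x.1 : ℕ) * (x.2 : ℕ)) := by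
  rintro ⟨⟨b, hb⟩, ⟨m, hm⟩⟩ ⟨⟨b', hb'⟩, ⟨m', hm'⟩⟩ h
  simp only at h
  have hbb : b = b' := by
    apply Nat.dvd_antisymm
    · exact (b3_cop q b m' hb hm').dvd_of_dvd_mul_right (h ▸ Dvd.intro _ rfl)
    · exact (b3_cop q b' m hb' hm).dvd_of_dvd_mul_right (h.symm ▸ Dvd.intro _ rfl)
  subst hbb
  have := Nat.eq_of_mul_eq_mul_left (Nat.pos_of_ne_zero (Nat.ne_zero_of_mem_factoredNumbers hb)) h
  subst this
  rfl

theorem b3_fac (q : ℕ) [NeZero q] (χ : DirichletCharacter ℂ q) (c : ZMod q → ℂ)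
    (hc : ∀ (u : (ZMod q)ˣ) a, c (u * a) = χ u * c a) (σ : ℝ) (hσ : 0 < σ) :
    ∑' n : ℕ, c n * (((n : ℝ) ^ (-(1 + σ)) : ℝ) : ℂ) =
     (∑' b : Nat.factoredNumbers q.primeFactors, c (b : ℕ) * ((((b : ℕ) : ℝ) ^ (-(1 + σ)) : ℝ) : ℂ)) *
      χ.LFunction (1 + σ) := by
  rw [← b3_L q χ σ hσ, ← (b3_inj q).tsum_eq]
  · have h1 : ∑' n : ℕ, χ n * (((n : ℝ) ^ (-(1 + σ)) : ℝ) : ℂ) =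
      ∑' n : {m : ℕ | m.Coprime q}, χ (n : ℕ) * ((((n : ℕ) : ℝ) ^ (-(1 + σ)) : ℝ) : ℂ) := by
      rw [tsum_subtype {m : ℕ | m.Coprime q} (fun n : ℕ => χ n * (((n : ℝ) ^ (-(1 + σ)) : ℝ) : ℂ))]
      apply tsum_congr
      intro n
      by_cases hn : n ∈ {m : ℕ | m.Coprime q}
      · rw [Set.indicator_of_mem hn]
      · rw [Set.indicator_of_notMem hn, χ.map_nonunit, zero_mul]
        rwa [ZMod.isUnit_iff_coprime]
    rw [h1, tsum_mul_tsum_of_summable_norm]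
    · apply tsum_congr
      rintro ⟨⟨b, hb⟩, ⟨m, hm⟩⟩
      have := hc (ZMod.unitOfCoprime m hm) b
      rw [ZMod.coe_unitOfCoprime] at this
      simp only
      rw [Nat.cast_mul, mul_comm (b : ZMod q), this, Nat.cast_mul, Real.mul_rpow (by positivity) (by positivity)]
      push_cast
      ring
    · exact (b3_sum q c σ hσ).norm.subtype _
    · exact (b3_sum q (fun a => χ a) σ hσ).norm.subtype _
  · intro n hn
    have hn0 : n ≠ 0 := by
      rintro rfl
      apply hn
      show c ((0 : ℕ) : ZMod q) * ((((0 : ℕ) : ℝ) ^ (-(1 + σ)) : ℝ) : ℂ) = 0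
      rw [Nat.cast_zero, Nat.cast_zero, Real.zero_rpow (by linarith)]
      simp
    obtain ⟨b, hb, m, hm, hbm⟩ := b3_surj q n hn0
    exact ⟨⟨⟨b, hb⟩, ⟨m, hm⟩⟩, hbm⟩

theorem b3_inv (q : ℕ) [NeZero q] :
   Summable (fun b : Nat.factoredNumbers q.primeFactors => (((b : ℕ) : ℝ))⁻¹) ∧
   ∑' b : Nat.factoredNumbers q.primeFactors, (((b : ℕ) : ℝ))⁻¹ = ∏ p ∈ q.primeFactors, (1 - (p : ℝ)⁻¹)⁻¹ := by
  have := EulerProduct.summable_and_hasSum_factoredNumbers_prod_filter_prime_geometric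
    (f := ({ toFun := fun n : ℕ => (n : ℝ)⁻¹, map_one' := by simp,
             map_mul' := fun a b => by push_cast; rw [mul_inv] } : ℕ →* ℝ)) (by
      intro p hp
      simp only [MonoidHom.coe_mk, OneHom.coe_mk]
      rw [Real.norm_of_nonneg (by positivity)]
      exact inv_lt_one_of_one_lt₀ (by exact_mod_cast hp.one_lt)) q.primeFactors
  refine ⟨?_, ?_⟩
  · simpa using this.1
  · have h2 := this.2.tsum_eq
    rw [Finset.filter_true_of_mem (fun p hp => Nat.prime_of_mem_primeFactors hp)] at h2
    simpa using h2

theorem b3_sinv (q : ℕ) [NeZero q] (c : ZMod q → ℂ) :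
    Summable (fun b : Nat.factoredNumbers q.primeFactors => c (b : ℕ) * ((((b : ℕ) : ℝ)⁻¹ : ℝ) : ℂ)) := by
  obtain ⟨C, hC⟩ : ∃ C : ℝ, ∀ a, ‖c a‖ ≤ C := ⟨∑ a, ‖c a‖, fun a =>
    Finset.single_le_sum (f := fun a => ‖c a‖) (fun _ _ => norm_nonneg _) (Finset.mem_univ a)⟩
  refine Summable.of_norm_bounded ((b3_inv q).1.mul_left C) fun n => ?_
  rw [norm_mul, Complex.norm_real, Real.norm_of_nonneg (by positivity)]
  exact mul_le_mul_of_nonneg_right (hC _) (by positivity)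

theorem b3_P (q : ℕ) [NeZero q] (c : ZMod q → ℂ) :
    Tendsto (fun σ : ℝ => ∑' b : Nat.factoredNumbers q.primeFactors, c (b : ℕ) * ((((b : ℕ) : ℝ) ^ (-(1 + σ)) : ℝ) : ℂ))
      (𝓝[>] 0) (𝓝 (∑' b : Nat.factoredNumbers q.primeFactors, c (b : ℕ) * ((((b : ℕ) : ℝ)⁻¹ : ℝ) : ℂ))) := by
  obtain ⟨C, hC⟩ : ∃ C : ℝ, ∀ a, ‖c a‖ ≤ C := ⟨∑ a, ‖c a‖, fun a =>
    Finset.single_le_sum (f := fun a => ‖c a‖) (fun _ _ => norm_nonneg _) (Finset.mem_univ a)⟩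
  apply tendsto_tsum_of_dominated_convergence ((b3_inv q).1.mul_left C)
  · rintro ⟨b, hb⟩
    have hb0 : (b : ℝ) ≠ 0 := by exact_mod_cast Nat.ne_zero_of_mem_factoredNumbers hb
    apply Tendsto.const_mul
    apply (Complex.continuous_ofReal.tendsto _).comp
    apply Tendsto.mono_left _ nhdsWithin_le_nhds
    have h1 : Continuous (fun σ : ℝ => (b : ℝ) ^ (-(1 + σ))) :=
      (Real.continuous_const_rpow hb0).comp (by fun_prop)
    have h2 := h1.tendsto 0
    rw [add_zero, Real.rpow_neg_one] at h2
    exact h2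
  · filter_upwards [self_mem_nhdsWithin] with σ hσ
    rintro ⟨b, hb⟩
    have hσ : 0 < σ := hσ
    have hb0 : 1 ≤ (b : ℝ) := by
      exact_mod_cast Nat.pos_of_ne_zero (Nat.ne_zero_of_mem_factoredNumbers hb)
    rw [norm_mul, Complex.norm_real, Real.norm_of_nonneg (by positivity)]
    apply mul_le_mul (hC _) _ (by positivity) ((norm_nonneg _).trans (hC 0))
    rw [← Real.rpow_neg_one]
    exact Real.rpow_le_rpow_of_exponent_le hb0 (by linarith)

theorem b3_zero (q : ℕ) [NeZero q] (χ : DirichletCharacter ℂ q) (T : ℝ → ℂ) (P : ℂ)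
    (hT : Tendsto T (𝓝[>] 0) (𝓝 P))
    (h0 : Tendsto (fun σ : ℝ => T σ * χ.LFunction (1 + σ)) (𝓝[>] 0) (𝓝 0)) : P = 0 := by
  by_cases hχ : χ = 1
  · have hl : Tendsto (fun σ : ℝ => (1 + σ : ℂ)) (𝓝[>] 0) (𝓝[≠] 1) := by
      apply tendsto_nhdsWithin_of_tendsto_nhds_of_eventually_within
      · apply Tendsto.mono_left _ nhdsWithin_le_nhds
        have h1 : Continuous (fun σ : ℝ => (1 + σ : ℂ)) := by fun_prop
        simpa using h1.tendsto 0
      · filter_upwards [self_mem_nhdsWithin] with σ hσ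
        have hσ : 0 < σ := hσ
        simp [hσ.ne']
    have h1 := (DirichletCharacter.LFunctionTrivChar_residue_one (N := q)).comp hl
    have h2 := hT.mul h1
    have h3 : Tendsto (fun σ : ℝ => (σ : ℂ)) (𝓝[>] 0) (𝓝 0) := by
      apply Tendsto.mono_left _ nhdsWithin_le_nhds
      simpa using Complex.continuous_ofReal.tendsto 0
    have h4 := h3.mul h0
    rw [zero_mul] at h4
    have h5 := tendsto_nhds_unique h2 (h4.congr fun σ => by
      subst hχ
      simp only [Function.comp, DirichletCharacter.LFunctionTrivChar]
      ring)
    rcases mul_eq_zero.1 h5 with h | h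
    · exact h
    · exfalso
      rw [Finset.prod_eq_zero_iff] at h
      obtain ⟨p, hp, hp0⟩ := h
      have := (Nat.prime_of_mem_primeFactors hp).one_lt.ne'
      rw [sub_eq_zero, eq_comm, inv_eq_one] at hp0
      exact this (by exact_mod_cast hp0)
  · have h1 : Tendsto (fun σ : ℝ => χ.LFunction (1 + σ)) (𝓝[>] 0) (𝓝 (χ.LFunction 1)) := by
      apply Tendsto.mono_left _ nhdsWithin_le_nhds
      have h2 : Tendsto (fun σ : ℝ => (1 + σ : ℂ)) (𝓝 0) (𝓝 1) := by
        have h1 : Continuous (fun σ : ℝ => (1 + σ : ℂ)) := by fun_prop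
        simpa using h1.tendsto 0
      exact (DirichletCharacter.differentiableAt_LFunction χ 1 (Or.inr hχ)).continuousAt.tendsto.comp h2
    have h5 := tendsto_nhds_unique (hT.mul h1) h0
    exact (mul_eq_zero.1 h5).resolve_right (DirichletCharacter.LFunction_apply_one_ne_zero hχ)

theorem b3_main (q : ℕ) [NeZero q] (F : ZMod q → ℤ)
    (hF : Tendsto (fun N => ∑ i ∈ range N, (F (i : ℕ) : ℂ) / (i : ℂ)) atTop (𝓝 0)) :
    ∑' b : Nat.factoredNumbers q.primeFactors, (F (b : ℕ) : ℂ) * ((((b : ℕ) : ℝ)⁻¹ : ℝ) : ℂ) = 0 := by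
  classical
  obtain ⟨c, hc⟩ : ∃ c : DirichletCharacter ℂ q → ZMod q → ℂ, ∀ χ a, c χ a =
    ∑ h : (ZMod q)ˣ, χ ((h⁻¹ : (ZMod q)ˣ) : ZMod q) * (F (h * a) : ℂ) := ⟨_, fun _ _ => rfl⟩
  have hmul : ∀ χ (u : (ZMod q)ˣ) a, c χ (u * a) = χ u * c χ a := by
    intro χ u a
    rw [hc, hc, Finset.mul_sum, ← Equiv.sum_comp (Equiv.mulRight u)
      (fun h : (ZMod q)ˣ => χ u * (χ ((h⁻¹ : (ZMod q)ˣ) : ZMod q) * (F (h * a) : ℂ)))]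
    apply Finset.sum_congr rfl
    intro h _
    simp only [Equiv.coe_mulRight]
    rw [← mul_assoc (χ u), ← map_mul, mul_inv, mul_comm h⁻¹, Units.val_mul,
      Units.mul_inv_cancel_left, Units.val_mul, mul_assoc]
  have hP : ∀ χ, ∑' b : Nat.factoredNumbers q.primeFactors, c χ (b : ℕ) * ((((b : ℕ) : ℝ)⁻¹ : ℝ) : ℂ) = 0 := by
    intro χ
    apply b3_zero q χ _ _ (b3_P q (c χ))
    have h1 : Tendsto (fun σ : ℝ => ∑ h : (ZMod q)ˣ, χ ((h⁻¹ : (ZMod q)ˣ) : ZMod q) *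
      ∑' n : ℕ, (F (h * n) : ℂ) * (((n : ℝ) ^ (-(1 + σ)) : ℝ) : ℂ)) (𝓝[>] 0) (𝓝 0) := by
      rw [show (0 : ℂ) = ∑ h : (ZMod q)ˣ, χ ((h⁻¹ : (ZMod q)ˣ) : ZMod q) * 0 by simp]
      apply tendsto_finset_sum
      intro h _
      exact (b3_Z q (fun a => F (h * a)) (pb_conj q F hF h)).const_mul _
    refine h1.congr' ?_
    filter_upwards [self_mem_nhdsWithin] with σ hσ
    have hσ : 0 < σ := hσ
    rw [← b3_fac q χ (c χ) (hmul χ) σ hσ]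
    simp only [← tsum_mul_left]
    rw [← Summable.tsum_finsetSum]
    · apply tsum_congr
      intro n
      rw [hc, Finset.sum_mul]
      simp only [mul_assoc]
    · intro h _
      exact (b3_sum q (fun a => (F (h * a) : ℂ)) σ hσ).mul_left _
  have hsum : ∀ a, ∑ χ, c χ a = (q.totient : ℂ) * F a := by
    intro a
    simp only [hc]
    rw [Finset.sum_comm]
    simp only [← Finset.sum_mul, DirichletCharacter.sum_characters_eq]
    rw [Finset.sum_eq_single 1]
    · simp
    · intro h _ hne
      rw [if_neg, zero_mul]
      intro h1
      exact hne (inv_eq_one.1 (Units.ext h1))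
    · simp
  have h2 : ∑ χ, ∑' b : Nat.factoredNumbers q.primeFactors, c χ (b : ℕ) * ((((b : ℕ) : ℝ)⁻¹ : ℝ) : ℂ) = 0 :=
    Finset.sum_eq_zero fun χ _ => hP χ
  rw [← Summable.tsum_finsetSum (fun χ _ => b3_sinv q (c χ))] at h2
  simp only [← Finset.sum_mul, hsum, mul_assoc] at h2
  rw [tsum_mul_left] at h2
  refine (mul_eq_zero.1 h2).resolve_left ?_
  exact_mod_cast (Nat.totient_pos.2 (NeZero.pos q)).ne'

end partB3

section partC
open Filter Topology Finset

theorem c_per (q : ℕ) (f : ℕ → ℤ) (hf : ∀ n : ℕ, 1 ≤ n → f (n + q) = f n) (n : ℕ) (hn : 1 ≤ n) (k : ℕ) :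
    f (n + q * k) = f n := by
  induction k with
  | zero => simp
  | succ k ih => rw [Nat.mul_succ, ← add_assoc, hf _ (by omega), ih]

theorem c_ratio (q : ℕ) [NeZero q] : ∏ p ∈ q.primeFactors, (1 - (p : ℝ)⁻¹)⁻¹ = (q : ℝ) / q.totient := by
  have h := Nat.totient_eq_mul_prod_factors q
  have h2 : (q.totient : ℝ) = q * ∏ p ∈ q.primeFactors, (1 - (p : ℝ)⁻¹) := by
    have h3 := congrArg (fun x : ℚ => (x : ℝ)) h
    push_cast at h3
    exact h3
  have hq : (q : ℝ) ≠ 0 := by exact_mod_cast NeZero.ne q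
  rw [Finset.prod_inv_distrib, h2, div_mul_eq_div_div, div_self hq, one_div]

theorem c_main (q : ℕ) (hq : 1 < q) (h : q < 2 * q.totient) : ErdosConjectureHolds q := by
  classical
  rintro ⟨f, ⟨hper, hpm, hz⟩, hlim⟩
  have : NeZero q := ⟨by omega⟩
  obtain ⟨F, hF⟩ : ∃ F : ZMod q → ℤ, ∀ a, F a = if a = 0 then 0 else f a.val := ⟨_, fun _ => rfl⟩
  have hFn : ∀ n : ℕ, 1 ≤ n → F n = f n := by
    intro n hn
    rw [hF]
    split_ifs with h0
    · rw [hz n hn ((ZMod.natCast_eq_zero_iff _ _).1 h0)]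
    · rw [ZMod.val_natCast]
      have h1 : n % q ≠ 0 := fun h1 => h0 ((ZMod.natCast_eq_zero_iff _ _).2 (Nat.dvd_of_mod_eq_zero h1))
      conv_rhs => rw [← Nat.mod_add_div n q]
      rw [c_per q f hper _ (by omega)]
  have hF1 : F 1 = 1 ∨ F 1 = -1 := by
    have := hFn 1 le_rfl
    rw [Nat.cast_one] at this
    rw [this]
    exact hpm 1 le_rfl (fun h => by have := Nat.dvd_one.1 h; omega)
  have habs : ∀ a, |F a| ≤ 1 := by
    intro a
    rw [hF]
    split_ifs with h0
    · simp
    · have h1 : a.val ≠ 0 := fun h => h0 ((ZMod.val_eq_zero a).1 h)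
      have h2 := ZMod.val_lt a
      rcases hpm a.val (by omega) (fun h => by have := Nat.le_of_dvd (by omega) h; omega) with h | h <;> rw [h] <;> simp
  have hlimF : Tendsto (fun N => ∑ i ∈ range N, (F (i : ℕ) : ℂ) / (i : ℂ)) atTop (𝓝 0) := by
    rw [← tendsto_add_atTop_iff_nat 1]
    have h1 := (Complex.continuous_ofReal.tendsto 0).comp hlim
    rw [Complex.ofReal_zero] at h1
    refine h1.congr fun N => ?_
    rw [Finset.range_eq_Ico, Finset.sum_eq_sum_Ico_succ_bot (by omega)]
    have : Finset.Ico (0 + 1) (N + 1) = Finset.Icc 1 N := by ext; simp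
    rw [this, Nat.cast_zero, Nat.cast_zero, div_zero, zero_add, Function.comp, Complex.ofReal_sum]
    apply Finset.sum_congr rfl
    intro n hn
    rw [hFn n (Finset.mem_Icc.1 hn).1]
    push_cast
    rfl
  have h0 := b3_main q F hlimF
  have h0' : ∑' b : Nat.factoredNumbers q.primeFactors, (F (b : ℕ) : ℝ) * ((b : ℕ) : ℝ)⁻¹ = 0 := by
    have : (((∑' b : Nat.factoredNumbers q.primeFactors, (F (b : ℕ) : ℝ) * ((b : ℕ) : ℝ)⁻¹ : ℝ)) : ℂ) = 0 := by
      rw [Complex.ofReal_tsum, ← h0]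
      apply tsum_congr
      intro b
      push_cast
      rfl
    exact_mod_cast this
  obtain ⟨hs, hsum⟩ := b3_inv q
  rw [c_ratio] at hsum
  have hs2 : Summable (fun b : Nat.factoredNumbers q.primeFactors => (F (b : ℕ) : ℝ) * ((b : ℕ) : ℝ)⁻¹) := by
    refine Summable.of_norm_bounded hs fun b => ?_
    rw [norm_mul, Real.norm_of_nonneg (by positivity : (0 : ℝ) ≤ ((b : ℕ) : ℝ)⁻¹)]
    have : ‖(F (b : ℕ) : ℝ)‖ ≤ 1 := by rw [Real.norm_eq_abs]; exact_mod_cast habs _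
    exact mul_le_of_le_one_left (by positivity) this
  have hs3 := hs.add (hs2.mul_left (F 1 : ℝ))
  have ht := hs.tsum_add (hs2.mul_left (F 1 : ℝ))
  rw [tsum_mul_left, h0', mul_zero, add_zero, hsum] at ht
  have hle := hs3.le_tsum (⟨1, by simp [Nat.mem_factoredNumbers]⟩ : Nat.factoredNumbers q.primeFactors) (by
    intro b _
    have : |(F (b : ℕ) : ℝ)| ≤ 1 := by exact_mod_cast habs _
    have h2 := abs_le.1 this
    have h3 : (0 : ℝ) ≤ ((b : ℕ) : ℝ)⁻¹ := by positivity
    rcases hF1 with h | h <;> rw [h] <;> push_cast <;> nlinarith)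
  rw [ht] at hle
  have h4 : (2 : ℝ) ≤ (q : ℝ) / q.totient := by
    refine le_trans (le_of_eq ?_) hle
    rcases hF1 with h | h <;> simp [h] <;> norm_num
  have hφ : (0 : ℝ) < q.totient := by exact_mod_cast Nat.totient_pos.2 (by omega)
  rw [le_div_iff₀ hφ] at h4
  have : 2 * q.totient ≤ q := by exact_mod_cast h4
  omega

end partC

section partD
open Filter Topology Finset

theorem d_A (k : ℕ) (hk : 4 ≤ k) : (∏ i ∈ range k, if (2 * i + 3).Prime then
    (1 + 1 / ((((2 * i + 3 : ℕ) : ℝ) - 1) * ((2 * i + 3 : ℕ) : ℝ))) else 1) * ((4 * k + 3) / (4 * k + 2)) ≤ 1.324 := by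
  induction k, hk using Nat.le_induction with
  | base =>
    have h3 : Nat.Prime 3 := by norm_num
    have h5 : Nat.Prime 5 := by norm_num
    have h7 : Nat.Prime 7 := by norm_num
    have h9 : ¬ Nat.Prime 9 := by norm_num
    simp only [Finset.prod_range_succ, Finset.prod_range_zero]
    norm_num [h3, h5, h7, h9]
  | succ k hk ih =>
    rw [Finset.prod_range_succ]
    refine le_trans ?_ ih
    rw [mul_assoc]
    apply mul_le_mul_of_nonneg_left
    · have hk0 : (0 : ℝ) ≤ k := by positivity
      have h1 : (if (2 * k + 3).Prime then
        (1 + 1 / ((((2 * k + 3 : ℕ) : ℝ) - 1) * ((2 * k + 3 : ℕ) : ℝ))) else 1) ≤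
          1 + 1 / ((2 * (k : ℝ) + 2) * (2 * k + 3)) := by
        split_ifs
        · push_cast
          rw [show 2 * (k : ℝ) + 3 - 1 = 2 * k + 2 by ring]
        · have : (0 : ℝ) ≤ 1 / ((2 * (k : ℝ) + 2) * (2 * k + 3)) := by positivity
          linarith
      refine le_trans (mul_le_mul_of_nonneg_right h1 (by positivity)) ?_
      push_cast
      rw [← sub_nonneg]
      have : (4 * (k : ℝ) + 3) / (4 * k + 2) - (1 + 1 / ((2 * (k : ℝ) + 2) * (2 * k + 3))) *
        ((4 * (k + 1) + 3) / (4 * (k + 1) + 2)) =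
         ((4 * (k : ℝ) + 3) * ((2 * k + 2) * (2 * k + 3) * (4 * k + 6)) -
          (4 * k + 2) * (4 * k + 7) * ((2 * k + 2) * (2 * k + 3) + 1)) /
          ((4 * k + 2) * ((2 * k + 2) * (2 * k + 3) * (4 * k + 6))) := by
        field_simp
        ring
      rw [this]
      apply div_nonneg _ (by positivity)
      ring_nf
      positivity
    · apply Finset.prod_nonneg
      intro i _
      split_ifs
      · push_cast
        rw [show 2 * (i : ℝ) + 3 - 1 = 2 * i + 2 by ring]
        positivity
      · norm_num

theorem d_B (k : ℕ) : (∏ i ∈ range k, if (2 * i + 3).Prime then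
    (1 + 1 / (((2 * i + 3 : ℕ) : ℝ) - 1)) else 1) ^ 2 ≤ 2 * k + 1 := by
  induction k with
  | zero => simp
  | succ k ih =>
    rw [Finset.prod_range_succ, mul_pow]
    have hk0 : (0 : ℝ) ≤ k := by positivity
    have h1 : (if (2 * k + 3).Prime then (1 + 1 / (((2 * k + 3 : ℕ) : ℝ) - 1)) else 1) ^ 2 ≤
        (2 * (k : ℝ) + 3) / (2 * k + 1) := by
      rw [le_div_iff₀ (by positivity)]
      split_ifs
      · push_cast
        rw [show 2 * (k : ℝ) + 3 - 1 = 2 * k + 2 by ring, one_add_div (by positivity), div_pow,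
          div_mul_eq_mul_div, div_le_iff₀ (by positivity)]
        nlinarith
      · linarith
    refine le_trans (mul_le_mul ih h1 (by positivity) (by positivity)) ?_
    rw [mul_div_cancel₀ _ (by positivity)]
    push_cast
    linarith

theorem d_count (X d : ℕ) (hd : d % 2 = 1) :
    ((((Finset.Icc 1 X).filter (fun q => q % 4 = 1)).filter (fun q => d ∣ q)).card : ℝ) ≤
      (X : ℝ) / 4 / d + 1 := by
  have h1 : (((Finset.Icc 1 X).filter (fun q => q % 4 = 1)).filter (fun q => d ∣ q)).card ≤
      (range (X / (4 * d) + 1)).card := by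
    apply Finset.card_le_card_of_injOn (fun q => q / (4 * d))
    · intro q hq
      simp only [coe_filter, mem_filter, mem_Icc, Set.mem_setOf_eq] at hq
      simp only [coe_range, Set.mem_Iio]
      have := Nat.div_le_div_right (c := 4 * d) hq.1.1.2
      omega
    · intro q hq r hr h
      simp only [coe_filter, mem_filter, mem_Icc, Set.mem_setOf_eq] at hq hr
      simp only at h
      have hc : Nat.Coprime 4 d := by
        have : Nat.Coprime 2 d := (Nat.coprime_two_left).2 (Nat.odd_iff.2 hd)
        exact Nat.Coprime.pow_left 2 this
      have hm : q ≡ r [MOD 4 * d] := by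
        rw [← Nat.modEq_and_modEq_iff_modEq_mul hc]
        refine ⟨hq.1.2.trans hr.1.2.symm, ?_⟩
        exact ((Nat.modEq_zero_iff_dvd).2 hq.2).trans ((Nat.modEq_zero_iff_dvd).2 hr.2).symm
      rw [← Nat.div_add_mod q (4 * d), ← Nat.div_add_mod r (4 * d), h, hm]
  rw [Finset.card_range] at h1
  have h2 : ((X / (4 * d) : ℕ) : ℝ) ≤ (X : ℝ) / ((4 * d : ℕ) : ℝ) := Nat.cast_div_le
  push_cast at h2
  rw [div_div]
  have h3 : ((((Finset.Icc 1 X).filter (fun q => q % 4 = 1)).filter (fun q => d ∣ q)).card : ℝ) ≤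
    ((X / (4 * d) + 1 : ℕ) : ℝ) := by exact_mod_cast h1
  push_cast at h3
  push_cast
  linarith

theorem d_lower (X : ℕ) : (X : ℝ) / 4 - 1 ≤ ((Finset.Icc 1 X).filter (fun q => q % 4 = 1)).card := by
  have h1 : (range (X / 4)).card ≤ ((Finset.Icc 1 X).filter (fun q => q % 4 = 1)).card := by
    apply Finset.card_le_card_of_injOn (fun q => 4 * q + 1)
    · intro q hq
      simp only [coe_range, Set.mem_Iio] at hq
      simp only [coe_filter, mem_Icc, Set.mem_setOf_eq]
      omega
    · intro q _ r _ h
      simp only at h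
      omega
  rw [Finset.card_range] at h1
  have h2 : X < 4 * (X / 4) + 4 := by omega
  have h3 : (X : ℝ) < 4 * ((X / 4 : ℕ) : ℝ) + 4 := by exact_mod_cast h2
  have h4 : ((X / 4 : ℕ) : ℝ) ≤ ((Finset.Icc 1 X).filter (fun q => q % 4 = 1)).card := by
    exact_mod_cast h1
  linarith

theorem d_ratio (q : ℕ) (hq : q ≠ 0) : (q : ℝ) / q.totient =
    ∑ S ∈ q.primeFactors.powerset, ∏ p ∈ S, 1 / ((p : ℝ) - 1) := by
  have : NeZero q := ⟨hq⟩
  rw [← c_ratio, ← Finset.prod_one_add]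
  apply Finset.prod_congr rfl
  intro p hp
  have h1 : (1 : ℝ) < p := by exact_mod_cast (Nat.prime_of_mem_primeFactors hp).one_lt
  have h2 : (p : ℝ) - 1 ≠ 0 := by linarith
  have h3 : (p : ℝ) ≠ 0 := by linarith
  have h4 : 1 - (p : ℝ)⁻¹ = ((p : ℝ) - 1) / p := by field_simp
  rw [h4, inv_div]
  field_simp
  ring

theorem d_sum (X : ℕ) (hX : 4 ≤ X) : ∑ q ∈ (Finset.Icc 1 X).filter (fun q => q % 4 = 1), (q : ℝ) / q.totient ≤
    1.324 * ((X : ℝ) / 4) + √(2 * X + 1) := by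
  classical
  obtain ⟨A, hA⟩ : ∃ A, A = (Finset.Icc 1 X).filter (fun q => q % 4 = 1) := ⟨_, rfl⟩
  obtain ⟨P, hP⟩ : ∃ P, P = ((range X).image (fun i => 2 * i + 3)).filter Nat.Prime := ⟨_, rfl⟩
  obtain ⟨g, hg⟩ : ∃ g : Finset ℕ → ℝ, ∀ S, g S = ∏ p ∈ S, 1 / ((p : ℝ) - 1) := ⟨_, fun _ => rfl⟩
  have hprod : ∀ f : ℕ → ℝ, ∏ p ∈ P, f p = ∏ i ∈ range X, if (2 * i + 3).Prime then f (2 * i + 3) else 1 := by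
    intro f
    rw [hP, Finset.prod_filter, Finset.prod_image]
    intro a _ b _ h
    simp only at h
    omega
  have hPodd : ∀ p ∈ P, p.Prime ∧ p % 2 = 1 := by
    intro p hp
    rw [hP, mem_filter, mem_image] at hp
    obtain ⟨⟨i, _, hi⟩, hp⟩ := hp
    exact ⟨hp, by omega⟩
  have hg0 : ∀ S ∈ P.powerset, 0 ≤ g S := by
    intro S hS
    rw [hg]
    apply Finset.prod_nonneg
    intro p hp
    have h1 : (1 : ℝ) < p := by exact_mod_cast (hPodd p (mem_powerset.1 hS hp)).1.one_lt
    have : (0 : ℝ) < p - 1 := by linarith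
    positivity
  rw [← hA]
  have h1 : ∀ q ∈ A, (q : ℝ) / q.totient = ∑ S ∈ P.powerset, if S ⊆ q.primeFactors then g S else 0 := by
    intro q hq
    rw [hA, mem_filter, mem_Icc] at hq
    rw [d_ratio q (by omega), ← Finset.sum_filter]
    have : q.primeFactors ⊆ P := by
      intro p hp
      have hpp := Nat.prime_of_mem_primeFactors hp
      have hpd := Nat.dvd_of_mem_primeFactors hp
      have hle := Nat.le_of_dvd (by omega) hpd
      have hp2 : p ≠ 2 := by
        rintro rfl
        omega
      have hodd := hpp.eq_two_or_odd.resolve_left hp2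
      have := hpp.two_le
      rw [hP, mem_filter, mem_image]
      exact ⟨⟨(p - 3) / 2, by rw [mem_range]; omega, by omega⟩, hpp⟩
    have h2 : P.powerset.filter (fun S => S ⊆ q.primeFactors) = q.primeFactors.powerset := by
      ext S
      rw [mem_filter, mem_powerset, mem_powerset]
      exact ⟨fun h => h.2, fun h => ⟨h.trans this, h⟩⟩
    rw [h2]
    exact Finset.sum_congr rfl fun S _ => (hg S).symm
  rw [Finset.sum_congr rfl h1, Finset.sum_comm]
  have h2 : ∀ S ∈ P.powerset, (∑ q ∈ A, if S ⊆ q.primeFactors then g S else 0) ≤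
      (X : ℝ) / 4 * (∏ p ∈ S, 1 / (((p : ℝ) - 1) * p)) + ∏ p ∈ S, 1 / ((p : ℝ) - 1) := by
    intro S hS
    rw [← Finset.sum_filter, Finset.sum_const, nsmul_eq_mul]
    have hodd : (∏ p ∈ S, p) % 2 = 1 := by
      rw [← Nat.odd_iff]
      apply Finset.prod_induction _ Odd (fun a b ha hb => ha.mul hb) odd_one
      intro p hp
      exact Nat.odd_iff.2 (hPodd p (mem_powerset.1 hS hp)).2
    have hc := d_count X (∏ p ∈ S, p) hodd
    rw [← hA] at hc
    have hcard : ((A.filter (fun q => S ⊆ q.primeFactors)).card : ℝ) ≤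
        ((A.filter (fun q => (∏ p ∈ S, p) ∣ q)).card : ℝ) := by
      norm_cast
      apply Finset.card_le_card
      intro q hq
      rw [mem_filter] at hq ⊢
      refine ⟨hq.1, ?_⟩
      exact (Finset.prod_dvd_prod_of_subset _ _ (fun p => p) hq.2).trans (Nat.prod_primeFactors_dvd q)
    refine le_trans (mul_le_mul_of_nonneg_right (hcard.trans hc) (hg0 S hS)) (le_of_eq ?_)
    rw [add_mul, one_mul, hg]
    congr 1
    rw [div_mul_eq_mul_div, mul_div_assoc, Nat.cast_prod, ← Finset.prod_div_distrib]
    congr 1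
    apply Finset.prod_congr rfl
    intro p _
    rw [div_div]
  refine le_trans (Finset.sum_le_sum h2) ?_
  rw [Finset.sum_add_distrib, ← Finset.mul_sum, ← Finset.prod_one_add, ← Finset.prod_one_add, hprod, hprod]
  apply add_le_add
  · rw [mul_comm]
    apply mul_le_mul_of_nonneg_right _ (by positivity)
    refine le_trans (le_mul_of_one_le_right ?_ ?_) (d_A X hX)
    · apply Finset.prod_nonneg
      intro i _
      split_ifs
      · push_cast
        rw [show 2 * (i : ℝ) + 3 - 1 = 2 * i + 2 by ring]
        positivity
      · norm_num
    · rw [one_le_div (by positivity)]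
      linarith
  · apply Real.le_sqrt_of_sq_le
    exact d_B X


end partD

open scoped Classical in
theorem erdos_true_density_67 :
    0.67 ≤ atTop.liminf (fun X : ℕ =>
      (((Finset.Icc 1 X).filter
        (fun q => q % 4 = 1 ∧ ErdosConjectureHolds q)).card : ℝ) / ((X : ℝ) / 4)) := by
  have hcob : IsCoboundedUnder (· ≥ ·) atTop (fun X : ℕ =>
      (((Finset.Icc 1 X).filter
        (fun q => q % 4 = 1 ∧ ErdosConjectureHolds q)).card : ℝ) / ((X : ℝ) / 4)) := by
    apply IsBoundedUnder.isCoboundedUnder_ge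
    refine ⟨4, ?_⟩
    rw [eventually_map]
    filter_upwards [eventually_gt_atTop 0] with X hX
    have hX' : (0 : ℝ) < X := by exact_mod_cast hX
    rw [div_le_iff₀ (by positivity)]
    have h1 : (((Finset.Icc 1 X).filter
        (fun q => q % 4 = 1 ∧ ErdosConjectureHolds q)).card) ≤ X :=
      (Finset.card_filter_le _ _).trans (by simp)
    have h2 : ((((Finset.Icc 1 X).filter
        (fun q => q % 4 = 1 ∧ ErdosConjectureHolds q)).card) : ℝ) ≤ X := by exact_mod_cast h1
    linarith
  refine le_liminf_of_le hcob ?_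
  filter_upwards [eventually_ge_atTop 3000000] with X hX
  have hX' : (3000000 : ℝ) ≤ X := by exact_mod_cast hX
  rw [le_div_iff₀ (by positivity)]
  obtain ⟨A, hA⟩ : ∃ A, A = (Finset.Icc 1 X).filter (fun q => q % 4 = 1) := ⟨_, rfl⟩
  obtain ⟨G, hG⟩ : ∃ G, G = (Finset.Icc 1 X).filter
    (fun q => q % 4 = 1 ∧ ErdosConjectureHolds q) := ⟨_, rfl⟩
  have hlow := d_lower X
  have hsum := d_sum X (by omega)
  rw [← hA] at hlow hsum
  rw [← hG]
  have hsub : A ⊆ insert 1 (G ∪ A.filter (fun q => 2 * q.totient ≤ q)) := by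
    intro q hq
    rw [mem_insert, mem_union, mem_filter]
    by_cases h : 2 * q.totient ≤ q
    · exact Or.inr (Or.inr ⟨hq, h⟩)
    · by_cases h1 : q = 1
      · exact Or.inl h1
      · right; left
        rw [hA, mem_filter, mem_Icc] at hq
        rw [hG, mem_filter, mem_Icc]
        exact ⟨hq.1, hq.2, c_main q (by omega) (by omega)⟩
  have hcard : A.card ≤ G.card + (A.filter (fun q => 2 * q.totient ≤ q)).card + 1 :=
    (Finset.card_le_card hsub).trans ((Finset.card_insert_le _ _).trans
      (Nat.add_le_add_right (Finset.card_union_le _ _) 1))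
  have hcard' : (A.card : ℝ) ≤ G.card + (A.filter (fun q => 2 * q.totient ≤ q)).card + 1 := by
    exact_mod_cast hcard
  have hbad : (A.card : ℝ) + (A.filter (fun q => 2 * q.totient ≤ q)).card ≤
      ∑ q ∈ A, (q : ℝ) / q.totient := by
    rw [Finset.card_eq_sum_ones, Finset.card_filter]
    push_cast
    rw [← Finset.sum_add_distrib]
    apply Finset.sum_le_sum
    intro q hq
    rw [hA, mem_filter, mem_Icc] at hq
    have hφ : (0 : ℝ) < q.totient := by exact_mod_cast Nat.totient_pos.2 (by omega)
    rw [le_div_iff₀ hφ]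
    split_ifs with h
    · have : 2 * (q.totient : ℝ) ≤ q := by exact_mod_cast h
      linarith
    · have : (q.totient : ℝ) ≤ q := by exact_mod_cast Nat.totient_le q
      linarith
  have hsq : √(2 * (X : ℝ) + 1) ≤ 0.001 * X := by
    rw [Real.sqrt_le_left (by positivity)]
    nlinarith
  norm_num at hsum hsq ⊢
  linarith
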